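/- CK-extension: Let Ω₀ ⊆ ℝ^{p+1} be a domain and f₀ ∈ C^ω(Ω₀, 𝔸) a real analytic function. Then there is a p-symmetric slice domain Ω with Ω₀ ⊂ Ω ⊆ Ω₀* := {x_p + x_q : x_p ∈ Ω₀, x_q ∈ ℝ^q} on which the two series defining CK[f₀] converge normally (locally uniformly), CK[f₀] restricted to Ω₀ equals f₀, and CK[f₀] is a left generalized partial-slice monogenic function on Ω. -/

import Mathlib

open scoped BigOperators
open Filter Topology

namespace GPSM

variable (A : Type*) [NormedAddCommGroup A] [NormedSpace ℝ A] [Mul A] [One A]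

/-- `A` is a real alternative algebra with unit `1`, of finite dimension `d > 1`,
equipped with an anti-involution `conj` (a real-linear map with `(a^c)^c = a`,
`(ab)^c = b^c a^c`, fixing the reals).  The associator is alternating (left/right
alternative laws). -/
structure IsAltStarAlg (conj : A → A) : Prop where
  finDim : FiniteDimensional ℝ A
  one_lt_finrank : 1 < Module.finrank ℝ A
  mul_add' : ∀ a b c : A, a * (b + c) = a * b + a * c
  add_mul' : ∀ a b c : A, (a + b) * c = a * c + b * c
  smul_mul' : ∀ (r : ℝ) (a b : A), (r • a) * b = r • (a * b)
  mul_smul' : ∀ (r : ℝ) (a b : A), a * (r • b) = r • (a * b)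
  one_mul' : ∀ a : A, 1 * a = a
  mul_one' : ∀ a : A, a * 1 = a
  alt_left : ∀ a b : A, a * (a * b) = a * a * b
  alt_right : ∀ a b : A, a * b * b = a * (b * b)
  conj_add : ∀ a b : A, conj (a + b) = conj a + conj b
  conj_smul : ∀ (r : ℝ) (a : A), conj (r • a) = r • conj a
  conj_conj : ∀ a : A, conj (conj a) = a
  conj_mul : ∀ a b : A, conj (a * b) = conj b * conj a
  conj_one : conj 1 = 1

/-- `v 0, v 1, …, v m` is a hypercomplex basis of the hypercomplex subspace
`M = span(v 0, …, v m)` of `A`: `v 0 = 1`, `t(v s) = 0`, `n(v s) = 1`, the `v s`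
anticommute for distinct `s, t ∈ {1,…,m}`, they are linearly independent, and
`M` is contained in the quadratic cone `Q_A`. -/
structure IsHypBasis (conj : A → A) (v : ℕ → A) (m : ℕ) : Prop where
  v_zero : v 0 = 1
  trace_zero : ∀ s, 1 ≤ s → s ≤ m → v s + conj (v s) = 0
  norm_one : ∀ s, 1 ≤ s → s ≤ m → v s * conj (v s) = 1
  anticomm : ∀ s t, 1 ≤ s → s ≤ m → 1 ≤ t → t ≤ m → s ≠ t → v s * v t = -(v t * v s)
  indep : LinearIndependent ℝ (fun i : Fin (m + 1) => v i)
  mem_cone : ∀ x ∈ Submodule.span ℝ (Set.range fun i : Fin (m + 1) => v (i : ℕ)),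
      ∃ tr nr : ℝ, x + conj x = tr • (1 : A) ∧ x * conj x = nr • (1 : A) ∧
        ((∃ r : ℝ, x = r • (1 : A)) ∨ tr ^ 2 < 4 * nr)

variable {A}

/-- Identification of `ℝ^{m+1}` with the hypercomplex subspace `M`:
`(x_0,…,x_m) ↦ Σ x_s • v s`. -/
def emb (v : ℕ → A) (m : ℕ) (x : Fin (m + 1) → ℝ) : A :=
  ∑ s : Fin (m + 1), x s • v (s : ℕ)

/-- First `p+1` coordinates of a point of `M ≅ ℝ^{m+1}`, i.e. the `x_p`-part. -/
def projP (m p : ℕ) (x : Fin (m + 1) → ℝ) : Fin (p + 1) → ℝ := fun s =>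
  if h : (s : ℕ) < m + 1 then x ⟨(s : ℕ), h⟩ else 0

/-- Inclusion `ℝ^{p+1} ⊆ ℝ^{m+1}` (remaining coordinates `0`). -/
def injP (m p : ℕ) (y : Fin (p + 1) → ℝ) : Fin (m + 1) → ℝ := fun s =>
  if h : (s : ℕ) < p + 1 then y ⟨(s : ℕ), h⟩ else 0

/-- The coordinates of `x_q` (last `q = m - p` coordinates of `x`). -/
def xqpart (m p : ℕ) (x : Fin (m + 1) → ℝ) : Fin (m + 1) → ℝ := fun s =>
  if (s : ℕ) ≤ p then 0 else x s

/-- The coordinates of `x_p` inside `ℝ^{m+1}`. -/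
def xppart (m p : ℕ) (x : Fin (m + 1) → ℝ) : Fin (m + 1) → ℝ := fun s =>
  if (s : ℕ) ≤ p then x s else 0

/-- `r = |x_q|`. -/
noncomputable def rad (m p : ℕ) (x : Fin (m + 1) → ℝ) : ℝ :=
  Real.sqrt (∑ s : Fin (m + 1), (xqpart m p x s) ^ 2)

/-- `ω = x_q / |x_q|` (coordinates), `0` when `x_q = 0`. -/
noncomputable def normq (m p : ℕ) (x : Fin (m + 1) → ℝ) : Fin (m + 1) → ℝ :=
  (rad m p x)⁻¹ • xqpart m p x

/-- The reflection `x = x_p + x_q ↦ x_⋄ = x_p - x_q`. -/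
def reflP (m p : ℕ) (x : Fin (m + 1) → ℝ) : Fin (m + 1) → ℝ := fun s =>
  if (s : ℕ) ≤ p then x s else -x s

/-- The sphere `𝕊 = {x_q ∈ span(v_{p+1},…,v_m) : x_q² = -1}`, in coordinates. -/
def Sph (v : ℕ → A) (m p : ℕ) : Set (Fin (m + 1) → ℝ) :=
  {w | (∀ s : Fin (m + 1), (s : ℕ) ≤ p → w s = 0) ∧ emb v m w * emb v m w = -1}

/-- The point `x_p + r ω` of `M ≅ ℝ^{m+1}`. -/
def pt (m p : ℕ) (w : Fin (m + 1) → ℝ) (y : Fin (p + 1) → ℝ) (r : ℝ) :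
    Fin (m + 1) → ℝ :=
  injP m p y + r • w

/-- The slice `Ω_ω ⊆ ℝ^{p+2}` of `Ω` at `ω`. -/
def sliceSet (m p : ℕ) (Ω : Set (Fin (m + 1) → ℝ)) (w : Fin (m + 1) → ℝ) :
    Set ((Fin (p + 1) → ℝ) × ℝ) := {z | pt m p w z.1 z.2 ∈ Ω}

/-- The restriction `f_ω` of `f` to the slice at `ω`, as a function on `ℝ^{p+2}`. -/
def sliceFun (m p : ℕ) (f : (Fin (m + 1) → ℝ) → A) (w : Fin (m + 1) → ℝ) :
    (Fin (p + 1) → ℝ) × ℝ → A := fun z => f (pt m p w z.1 z.2)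

/-- Partial derivative `∂_{x_s}` of a function on `ℝ^{m+1}`. -/
noncomputable def pdF (m : ℕ) (s : Fin (m + 1)) (f : (Fin (m + 1) → ℝ) → A)
    (x : Fin (m + 1) → ℝ) : A := fderiv ℝ f x (Pi.single s 1)

/-- Partial derivative `∂_{x_s}` of a function on `ℝ^{p+1}`. -/
noncomputable def pdP (p : ℕ) (s : Fin (p + 1)) (g : (Fin (p + 1) → ℝ) → A)
    (y : Fin (p + 1) → ℝ) : A := fderiv ℝ g y (Pi.single s 1)

/-- Partial derivative `∂_{x_s}` of a function on `ℝ^{p+2} = ℝ^{p+1} × ℝ`. -/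
noncomputable def pdSx (p : ℕ) (s : Fin (p + 1)) (G : (Fin (p + 1) → ℝ) × ℝ → A)
    (z : (Fin (p + 1) → ℝ) × ℝ) : A := fderiv ℝ G z (Pi.single s 1, 0)

/-- Partial derivative `∂_r` of a function on `ℝ^{p+2} = ℝ^{p+1} × ℝ`. -/
noncomputable def pdSr (p : ℕ) (G : (Fin (p + 1) → ℝ) × ℝ → A)
    (z : (Fin (p + 1) → ℝ) × ℝ) : A := fderiv ℝ G z (0, 1)

/-- Second partial derivative `∂_r²`. -/
noncomputable def pdSr2 (p : ℕ) (G : (Fin (p + 1) → ℝ) × ℝ → A)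
    (z : (Fin (p + 1) → ℝ) × ℝ) : A := pdSr p (pdSr p G) z

/-- The operator `Σ_{lo ≤ s ≤ hi} v_s ∂_{x_s}` on functions on `ℝ^{m+1}`.
`Dop v m 0 p` is `D_{x_p}`, `Dop v m (p+1) m` is `D_{x_q}`, `Dop v m 0 m` is `D_x`. -/
noncomputable def Dop (v : ℕ → A) (m lo hi : ℕ) (f : (Fin (m + 1) → ℝ) → A)
    (x : Fin (m + 1) → ℝ) : A :=
  ∑ s : Fin (m + 1), if lo ≤ (s : ℕ) ∧ (s : ℕ) ≤ hi then v (s : ℕ) * pdF m s f x else 0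

/-- The conjugate operator `∂_{x_0} - Σ_{1 ≤ s ≤ hi} v_s ∂_{x_s}` on functions on
`ℝ^{m+1}`; `Dbarop v m p` is `D̄_{x_p}`, `Dbarop v m m` is `D̄_x`. -/
noncomputable def Dbarop (v : ℕ → A) (m hi : ℕ) (f : (Fin (m + 1) → ℝ) → A)
    (x : Fin (m + 1) → ℝ) : A :=
  pdF m 0 f x -
    ∑ s : Fin (m + 1), if 1 ≤ (s : ℕ) ∧ (s : ℕ) ≤ hi then v (s : ℕ) * pdF m s f x else 0

/-- The operator `D_{x_p} = Σ_{s=0}^p v_s ∂_{x_s}` on functions on `ℝ^{p+1}`. -/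
noncomputable def DopP (v : ℕ → A) (p : ℕ) (g : (Fin (p + 1) → ℝ) → A)
    (y : Fin (p + 1) → ℝ) : A :=
  ∑ s : Fin (p + 1), v (s : ℕ) * pdP p s g y

/-- The operator `D̄_{x_p} = ∂_{x_0} - Σ_{s=1}^p v_s ∂_{x_s}` on functions on `ℝ^{p+1}`. -/
noncomputable def DbaropP (v : ℕ → A) (p : ℕ) (g : (Fin (p + 1) → ℝ) → A)
    (y : Fin (p + 1) → ℝ) : A :=
  pdP p 0 g y - ∑ s : Fin (p + 1), if 1 ≤ (s : ℕ) then v (s : ℕ) * pdP p s g y else 0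

/-- The operator `D_{x_p}` on functions on `ℝ^{p+2} = ℝ^{p+1} × ℝ`. -/
noncomputable def DopSx (v : ℕ → A) (p : ℕ) (G : (Fin (p + 1) → ℝ) × ℝ → A)
    (z : (Fin (p + 1) → ℝ) × ℝ) : A :=
  ∑ s : Fin (p + 1), v (s : ℕ) * pdSx p s G z

/-- The operator `D̄_{x_p}` on functions on `ℝ^{p+2} = ℝ^{p+1} × ℝ`. -/
noncomputable def DbaropSx (v : ℕ → A) (p : ℕ) (G : (Fin (p + 1) → ℝ) × ℝ → A)
    (z : (Fin (p + 1) → ℝ) × ℝ) : A :=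
  pdSx p 0 G z - ∑ s : Fin (p + 1), if 1 ≤ (s : ℕ) then v (s : ℕ) * pdSx p s G z else 0

/-- The Laplacian `Δ_x` on functions on `ℝ^{m+1}`. -/
noncomputable def lapF (m : ℕ) (f : (Fin (m + 1) → ℝ) → A)
    (x : Fin (m + 1) → ℝ) : A :=
  ∑ s : Fin (m + 1), pdF m s (pdF m s f) x

/-- The Laplacian `Δ_{x_p}` on functions on `ℝ^{p+1}`. -/
noncomputable def lapP (p : ℕ) (g : (Fin (p + 1) → ℝ) → A)
    (y : Fin (p + 1) → ℝ) : A :=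
  ∑ s : Fin (p + 1), pdP p s (pdP p s g) y

/-- Iterated Laplacian `Δ_x^k`. -/
noncomputable def lapIterF (m k : ℕ) (f : (Fin (m + 1) → ℝ) → A) :
    (Fin (m + 1) → ℝ) → A :=
  (fun g => lapF m g)^[k] f

/-- Iterated Laplacian `Δ_{x_p}^k`. -/
noncomputable def lapIterP (p k : ℕ) (g : (Fin (p + 1) → ℝ) → A) :
    (Fin (p + 1) → ℝ) → A :=
  (fun h => lapP p h)^[k] g

/-- The Laplacian `Δ_{x'} = Δ_{x_p} + ∂_r²` on functions on `ℝ^{p+2}`. -/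
noncomputable def lapSx (p : ℕ) (G : (Fin (p + 1) → ℝ) × ℝ → A)
    (z : (Fin (p + 1) → ℝ) × ℝ) : A :=
  (∑ s : Fin (p + 1), pdSx p s (pdSx p s G) z) + pdSr2 p G z

/-- The slice Cauchy-Riemann operator `D_ω = D_{x_p} + ω ∂_r` applied to a function
on `ℝ^{p+2}`, where `ω` is given in coordinates by `w`. -/
noncomputable def DomCR (v : ℕ → A) (m p : ℕ) (w : Fin (m + 1) → ℝ)
    (G : (Fin (p + 1) → ℝ) × ℝ → A) (z : (Fin (p + 1) → ℝ) × ℝ) : A :=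
  DopSx v p G z + emb v m w * pdSr p G z

/-- `f` is left generalized partial-slice monogenic (of type `(p, m-p)`) on `Ω`. -/
def GSM (v : ℕ → A) (m p : ℕ) (f : (Fin (m + 1) → ℝ) → A)
    (Ω : Set (Fin (m + 1) → ℝ)) : Prop :=
  ∀ w ∈ Sph v m p, ContDiffOn ℝ 1 (sliceFun m p f w) (sliceSet m p Ω w) ∧
    ∀ z ∈ sliceSet m p Ω w, DomCR v m p w (sliceFun m p f w) z = 0

/-- `Ω` is partially symmetric with respect to `ℝ^{p+1}`. -/
def PSym (v : ℕ → A) (m p : ℕ) (Ω : Set (Fin (m + 1) → ℝ)) : Prop :=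
  ∀ x ∈ Ω, ∀ w ∈ Sph v m p, xppart m p x + rad m p x • w ∈ Ω

/-- `Ω` is a slice domain: a domain meeting `ℝ^{p+1}` all of whose slices are
domains in `ℝ^{p+2}`. -/
def SliceDomain (v : ℕ → A) (m p : ℕ) (Ω : Set (Fin (m + 1) → ℝ)) : Prop :=
  IsOpen Ω ∧ IsConnected Ω ∧ (∃ x ∈ Ω, xqpart m p x = 0) ∧
    ∀ w ∈ Sph v m p, IsConnected (sliceSet m p Ω w)

/-- The reflection `(x_p, r) ↦ (x_p, -r)` of `ℝ^{p+2}`. -/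
def reflD (p : ℕ) (z : (Fin (p + 1) → ℝ) × ℝ) : (Fin (p + 1) → ℝ) × ℝ := (z.1, -z.2)

/-- The p-symmetric completion `Ω_D ⊆ M` of `D ⊆ ℝ^{p+2}`. -/
def OmegaD (v : ℕ → A) (m p : ℕ) (D : Set ((Fin (p + 1) → ℝ) × ℝ)) :
    Set (Fin (m + 1) → ℝ) :=
  {x | ∃ w ∈ Sph v m p, ∃ z ∈ D, x = pt m p w z.1 z.2}

/-- `(F₁, F₂)` satisfies the even-odd (stem function) conditions on `D`. -/
def IsStem (p : ℕ) (D : Set ((Fin (p + 1) → ℝ) × ℝ))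
    (F₁ F₂ : (Fin (p + 1) → ℝ) × ℝ → A) : Prop :=
  ∀ z ∈ D, F₁ (reflD p z) = F₁ z ∧ F₂ (reflD p z) = -F₂ z

/-- `f` is the generalized partial-slice function induced by the stem `(F₁, F₂)`:
`f(x_p + rω) = F₁(x_p, r) + ω F₂(x_p, r)`. -/
def Induced (v : ℕ → A) (m p : ℕ) (D : Set ((Fin (p + 1) → ℝ) × ℝ))
    (F₁ F₂ : (Fin (p + 1) → ℝ) × ℝ → A) (f : (Fin (m + 1) → ℝ) → A) : Prop :=
  ∀ w ∈ Sph v m p, ∀ z ∈ D, f (pt m p w z.1 z.2) = F₁ z + emb v m w * F₂ z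

/-- The generalized Cauchy-Riemann system for the stem `(F₁, F₂)` on `D`. -/
def StemCR (v : ℕ → A) (p : ℕ) (D : Set ((Fin (p + 1) → ℝ) × ℝ))
    (F₁ F₂ : (Fin (p + 1) → ℝ) × ℝ → A) : Prop :=
  ∀ z ∈ D, DopSx v p F₁ z - pdSr p F₂ z = 0 ∧ DbaropSx v p F₂ z + pdSr p F₁ z = 0

/-- `f` is generalized partial-slice regular on `Ω_D`. -/
def MemGSR (v : ℕ → A) (m p : ℕ) (D : Set ((Fin (p + 1) → ℝ) × ℝ))
    (f : (Fin (m + 1) → ℝ) → A) : Prop :=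
  ∃ F₁ F₂ : (Fin (p + 1) → ℝ) × ℝ → A, IsStem p D F₁ F₂ ∧
    ContDiffOn ℝ 1 F₁ D ∧ ContDiffOn ℝ 1 F₂ D ∧
    Induced v m p D F₁ F₂ f ∧ StemCR v p D F₁ F₂

/-- `f` is a generalized partial-slice function on `Ω`. -/
def MemGS (v : ℕ → A) (m p : ℕ) (Ω : Set (Fin (m + 1) → ℝ))
    (f : (Fin (m + 1) → ℝ) → A) : Prop :=
  ∃ F₁ F₂ : (Fin (p + 1) → ℝ) × ℝ → A,
    (∀ z : (Fin (p + 1) → ℝ) × ℝ, F₁ (reflD p z) = F₁ z ∧ F₂ (reflD p z) = -F₂ z) ∧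
    ∀ x ∈ Ω, f x = F₁ (projP m p x, rad m p x) +
      emb v m (normq m p x) * F₂ (projP m p x, rad m p x)

/-- Non-associative power: `a^n` with products taken from the right. -/
def apow (a : A) (n : ℕ) : A := (fun b => a * b)^[n] 1

/-- Partial even part `PE[f](x) = (f(x) + f(x_⋄))/2`. -/
noncomputable def PE (m p : ℕ) (f : (Fin (m + 1) → ℝ) → A)
    (x : Fin (m + 1) → ℝ) : A := (2 : ℝ)⁻¹ • (f x + f (reflP m p x))

/-- Partial odd part `PO[f](x) = (f(x) - f(x_⋄))/2`. -/
noncomputable def PO (m p : ℕ) (f : (Fin (m + 1) → ℝ) → A)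
    (x : Fin (m + 1) → ℝ) : A := (2 : ℝ)⁻¹ • (f x - f (reflP m p x))

/-- `Ω₀* = {x_p + x_q : x_p ∈ Ω₀, x_q ∈ ℝ^q}`. -/
def Omega0star (m p : ℕ) (Ω₀ : Set (Fin (p + 1) → ℝ)) : Set (Fin (m + 1) → ℝ) :=
  {x | projP m p x ∈ Ω₀}

/-- The spherical derivative `f'_s(x) = (1/2) x_q⁻¹ (f(x) - f(x_⋄))`
(using `x_q⁻¹ = -x_q/|x_q|²`). -/
noncomputable def sder (v : ℕ → A) (m p : ℕ) (f : (Fin (m + 1) → ℝ) → A)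
    (x : Fin (m + 1) → ℝ) : A :=
  -(((2 : ℝ) * rad m p x ^ 2)⁻¹) • (emb v m (xqpart m p x) * (f x - f (reflP m p x)))

/-- The spherical Dirac operator
`Γ f = -(1/2) Σ_{p+1 ≤ i,j ≤ m} v_i (v_j (L_{ij} f))`. -/
noncomputable def sphericalGamma (v : ℕ → A) (m p : ℕ) (f : (Fin (m + 1) → ℝ) → A)
    (x : Fin (m + 1) → ℝ) : A :=
  -((2 : ℝ)⁻¹) • ∑ i : Fin (m + 1), ∑ j : Fin (m + 1),
    if p < (i : ℕ) ∧ p < (j : ℕ) then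
      v (i : ℕ) * (v (j : ℕ) * (x i • pdF m j f x - x j • pdF m i f x)) else 0

/-- The slice Cauchy-Riemann operator `D_ω` applied to (the slice restriction of) a
function `f` on `M`, at the point `x` (with `ω = x_q/|x_q|`). -/
noncomputable def DomCRat (v : ℕ → A) (m p : ℕ) (f : (Fin (m + 1) → ℝ) → A)
    (x : Fin (m + 1) → ℝ) : A :=
  DomCR v m p (normq m p x) (sliceFun m p f (normq m p x)) (projP m p x, rad m p x)

/-- `f` is left monogenic on `Ω`: `f ∈ C¹` and `D_x f = 0`. -/
def Monogenic (v : ℕ → A) (m : ℕ) (f : (Fin (m + 1) → ℝ) → A)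
    (Ω : Set (Fin (m + 1) → ℝ)) : Prop :=
  ContDiffOn ℝ 1 f Ω ∧ ∀ x ∈ Ω, Dop v m 0 m f x = 0

/-- `f` is harmonic on `Ω`: `f ∈ C²` and `Δ_x f = 0`. -/
def Harmonic (m : ℕ) (f : (Fin (m + 1) → ℝ) → A)
    (Ω : Set (Fin (m + 1) → ℝ)) : Prop :=
  ContDiffOn ℝ 2 f Ω ∧ ∀ x ∈ Ω, lapF m f x = 0

/-- A family of functions converges normally (locally a summable uniform bound). -/
def NormallyConvOn {E F : Type*} [TopologicalSpace E] [NormedAddCommGroup F]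
    (u : ℕ → E → F) (s : Set E) : Prop :=
  ∀ x ∈ s, ∃ U ∈ nhds x, ∃ c : ℕ → ℝ, Summable c ∧ ∀ k : ℕ, ∀ y ∈ U, ‖u k y‖ ≤ c k

/-- The generalized partial-slice CK-extension
`CK[f₀](x) = Σ_k (r^{2k}/(2k)!)(-Δ_{x_p})^k f₀(x_p)
  + ω Σ_k (r^{2k+1}/(2k+1)!)(-Δ_{x_p})^k (D_{x_p} f₀)(x_p)`. -/
noncomputable def CKe (v : ℕ → A) (m p : ℕ) (f₀ : (Fin (p + 1) → ℝ) → A)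
    (x : Fin (m + 1) → ℝ) : A :=
  (∑' k : ℕ, (((-1 : ℝ) ^ k * rad m p x ^ (2 * k)) / (2 * k).factorial) •
      lapIterP p k f₀ (projP m p x)) +
  emb v m (normq m p x) *
    ∑' k : ℕ, (((-1 : ℝ) ^ k * rad m p x ^ (2 * k + 1)) / (2 * k + 1).factorial) •
      lapIterP p k (DopP v p f₀) (projP m p x)

/-- The coefficient `Γ(q/2)(-1)^k r^{2k} / (2^{2k} k! Γ(k + q/2))`. -/
noncomputable def hgckC (q k : ℕ) (r : ℝ) : ℝ :=
  (Real.Gamma ((q : ℝ) / 2) * (-1) ^ k * r ^ (2 * k)) /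
    (2 ^ (2 * k) * (k.factorial : ℝ) * Real.Gamma ((k : ℝ) + (q : ℝ) / 2))

/-- The coefficient `Γ(q/2)(-1)^k r^{2k} / (2^{2k+1} k! Γ(k + q/2 + 1))`. -/
noncomputable def gckC' (q k : ℕ) (r : ℝ) : ℝ :=
  (Real.Gamma ((q : ℝ) / 2) * (-1) ^ k * r ^ (2 * k)) /
    (2 ^ (2 * k + 1) * (k.factorial : ℝ) * Real.Gamma ((k : ℝ) + (q : ℝ) / 2 + 1))

/-- The coefficient `Γ(q/2 + 1)(-1)^k r^{2k} / (2^{2k} k! Γ(k + q/2 + 1))`. -/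
noncomputable def hgckC' (q k : ℕ) (r : ℝ) : ℝ :=
  (Real.Gamma ((q : ℝ) / 2 + 1) * (-1) ^ k * r ^ (2 * k)) /
    (2 ^ (2 * k) * (k.factorial : ℝ) * Real.Gamma ((k : ℝ) + (q : ℝ) / 2 + 1))

/-- The monogenic generalized CK-extension `GCK[A₀]`. -/
noncomputable def GCKe (v : ℕ → A) (m p : ℕ) (A₀ : (Fin (p + 1) → ℝ) → A)
    (x : Fin (m + 1) → ℝ) : A :=
  (∑' k : ℕ, hgckC (m - p) k (rad m p x) • lapIterP p k A₀ (projP m p x)) +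
  emb v m (xqpart m p x) *
    ∑' k : ℕ, gckC' (m - p) k (rad m p x) • lapIterP p k (DopP v p A₀) (projP m p x)

/-- The harmonic generalized CK-extension `HGCK[A₀, A₁]`. -/
noncomputable def HGCKe (v : ℕ → A) (m p : ℕ) (A₀ A₁ : (Fin (p + 1) → ℝ) → A)
    (x : Fin (m + 1) → ℝ) : A :=
  (∑' k : ℕ, hgckC (m - p) k (rad m p x) • lapIterP p k A₀ (projP m p x)) +
  emb v m (xqpart m p x) *
    ∑' k : ℕ, hgckC' (m - p) k (rad m p x) • lapIterP p k A₁ (projP m p x)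

/-- The operator `(1/r)∂_r`, extended to `r = 0` by its limit `∂_r²` (on even
functions). -/
noncomputable def T1 (p : ℕ) (G : (Fin (p + 1) → ℝ) × ℝ → A) :
    (Fin (p + 1) → ℝ) × ℝ → A := fun z =>
  if z.2 = 0 then pdSr2 p G z else (z.2)⁻¹ • pdSr p G z

/-- The operator `∂_r ∘ (1/r)`, extended to `r = 0` by its limit `(1/2)∂_r²` (on odd
functions). -/
noncomputable def T2 (p : ℕ) (G : (Fin (p + 1) → ℝ) × ℝ → A) :
    (Fin (p + 1) → ℝ) × ℝ → A := fun z =>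
  if z.2 = 0 then (2 : ℝ)⁻¹ • pdSr2 p G z
  else fderiv ℝ (fun t : ℝ => t⁻¹ • G (z.1, t)) z.2 1

/-- `C_q(k) = (q-1)(q-3)⋯(q-2k+1)`, `C_q(0) = 1`. -/
noncomputable def cq (q k : ℕ) : ℝ :=
  ∏ i ∈ Finset.range k, ((q : ℝ) - (2 * (i : ℝ) + 1))

/-- Double factorial. -/
def dfac : ℕ → ℕ
  | 0 => 1
  | 1 => 1
  | n + 2 => (n + 2) * dfac n

/-- The Fueter-Sce constant `γ_q = (-1)^{(q-1)/2} (q-1)!!/(q-2)!!`. -/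
noncomputable def gammaQ (q : ℕ) : ℝ :=
  (-1 : ℝ) ^ ((q - 1) / 2) * (dfac (q - 1) : ℝ) / (dfac (q - 2) : ℝ)


/-- A single fibre of a summable family of nonnegative reals is summable and bounded by the total. -/
theorem fibre_bound {J : ℕ → Type*} {g : (Σ k, J k) → NNReal} (hs : Summable g) (n : ℕ) :
    Summable (fun s : J n => g ⟨n, s⟩) ∧ ∑' s : J n, g ⟨n, s⟩ ≤ ∑' s, g s := by
  have hinj : Function.Injective (fun s : J n => (⟨n, s⟩ : Σ k, J k)) :=
    fun a b h => by simpa using h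
  have h1 : Summable (fun s : J n => g ⟨n, s⟩) := (NNReal.summable_sigma.1 hs).1 n
  exact ⟨h1, NNReal.tsum_comp_le_tsum_of_inj hs hinj⟩

theorem cauchy_bound {E F : Type*} [NormedAddCommGroup E] [NormedSpace ℝ E]
    [NormedAddCommGroup F] [NormedSpace ℝ F] [CompleteSpace F] {f : E → F} {x : E}
    (h : AnalyticAt ℝ f x) : ∃ ε > 0, ∃ C : ℝ, 0 ≤ C ∧ ∃ B : ℝ, 0 < B ∧
      ∀ y ∈ Metric.ball x ε, ∀ n : ℕ,
        ‖iteratedFDeriv ℝ n f y‖ ≤ C * B ^ n * n.factorial := by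
  obtain ⟨P, R, hP⟩ := h
  obtain ⟨r, hr0, hr⟩ := ENNReal.lt_iff_exists_nnreal_btwn.1 hP.r_pos
  have hr0' : 0 < r := by simpa using hr0
  set e : NNReal := r / 2 with he
  have he0 : 0 < e := by positivity
  have hee : ((e : ENNReal) + e) < P.radius := by
    have : (e : ENNReal) + e = r := by
      rw [← ENNReal.coe_add, he, add_halves]
    rw [this]; exact hr.trans_le hP.r_le
  have hs := P.changeOriginSeries_summable_aux₁ hee
  refine ⟨e, by exact_mod_cast he0, _, NNReal.coe_nonneg (∑' s : Σ k l : ℕ, { s : Finset (Fin (k + l)) // s.card = l },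
      ‖P (s.1 + s.2.1)‖₊ * e ^ s.2.1 * e ^ s.1), (e : ℝ)⁻¹, by positivity, ?_⟩
  intro y hy n
  set u := y - x with hu
  have hue : ‖u‖₊ < e := by
    rw [mem_ball_iff_norm] at hy
    exact_mod_cast hy
  have hur : (‖u‖₊ : ENNReal) < R := by
    refine lt_of_lt_of_le ?_ hr.le
    have : e ≤ r := by rw [he]; exact half_le_self (by positivity)
    exact_mod_cast hue.trans_le this
  have hQ := hP.changeOrigin hur
  have hxu : x + u = y := by simp [hu]
  rw [hxu] at hQ
  have hn : ‖iteratedFDeriv ℝ n f y‖ ≤ n.factorial * ‖P.changeOrigin u n‖ := by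
    refine ContinuousMultilinearMap.opNorm_le_bound (by positivity) fun w => ?_
    rw [hQ.iteratedFDeriv_eq_sum_of_completeSpace]
    refine (norm_sum_le _ _).trans ?_
    have : ∀ σ ∈ (Finset.univ : Finset (Equiv.Perm (Fin n))),
        ‖(P.changeOrigin u n) fun i => w (σ i)‖ ≤ ‖P.changeOrigin u n‖ * ∏ i, ‖w i‖ := by
      intro σ _
      refine ((P.changeOrigin u n).le_opNorm _).trans (le_of_eq ?_)
      congr 1
      exact Equiv.prod_comp σ (fun i => ‖w i‖)
    refine (Finset.sum_le_sum this).trans (le_of_eq ?_)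
    simp [Fintype.card_perm, mul_assoc]
  have h2 : ‖P.changeOrigin u n‖₊ * e ^ n ≤ ∑' s : Σ k l : ℕ, { s : Finset (Fin (k + l)) // s.card = l },
      ‖P (s.1 + s.2.1)‖₊ * e ^ s.2.1 * e ^ s.1 := by
    have h3 := P.nnnorm_changeOrigin_le n (hur.trans_le hP.r_le)
    obtain ⟨hs', hle⟩ := fibre_bound hs n
    dsimp only at hs' hle
    have hs2 : Summable fun s : Σ l : ℕ, { s : Finset (Fin (n + l)) // s.card = l } =>
        ‖P (n + s.1)‖₊ * e ^ s.1 := by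
      have := hs'.mul_right ((e ^ n)⁻¹)
      refine this.congr fun s => ?_
      field_simp
    calc _ ≤ (∑' s : Σ l : ℕ, { s : Finset (Fin (n + l)) // s.card = l },
        ‖P (n + s.1)‖₊ * e ^ s.1) * e ^ n := by
          gcongr
          refine h3.trans ?_
          refine Summable.tsum_le_tsum (fun s => ?_) (NNReal.summable_of_le (fun s => ?_) hs2) hs2 <;> gcongr
      _ = ∑' s : Σ l : ℕ, { s : Finset (Fin (n + l)) // s.card = l },
        ‖P (n + s.1)‖₊ * e ^ s.1 * e ^ n := by rw [NNReal.tsum_mul_right]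
      _ ≤ _ := hle
  have h4 := NNReal.coe_le_coe.2 h2
  rw [NNReal.coe_mul, coe_nnnorm, NNReal.coe_pow] at h4
  refine hn.trans ?_
  rw [mul_comm, inv_pow]
  gcongr
  rw [le_mul_inv_iff₀ (by positivity)]
  exact h4


set_option linter.unusedSectionVars false

section calculus

open scoped ContDiff

variable {p : ℕ}

/-- Smoothness on `U` with factorial bounds on all derivatives. -/
def Bd (g : (Fin (p + 1) → ℝ) → A) (U : Set (Fin (p + 1) → ℝ)) (C B : ℝ) (n0 : ℕ) : Prop :=
  ContDiffOn ℝ ∞ g U ∧ ∀ y ∈ U, ∀ n : ℕ,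
    ‖iteratedFDeriv ℝ n g y‖ ≤ C * B ^ n * (n + n0).factorial

/-- The constant coefficient operator `Σ_s L_s ∂_s`. -/
noncomputable def TL (L : Fin (p + 1) → A →L[ℝ] A) (g : (Fin (p + 1) → ℝ) → A)
    (y : Fin (p + 1) → ℝ) : A := ∑ s, L s (pdP p s g y)

variable {U : Set (Fin (p + 1) → ℝ)}

theorem fderiv_smooth {g : (Fin (p + 1) → ℝ) → A} (hU : IsOpen U) (hg : ContDiffOn ℝ ∞ g U) :
    ContDiffOn ℝ ∞ (fderiv ℝ g) U := hg.fderiv_of_isOpen hU (by simp)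

theorem pdP_smooth {g : (Fin (p + 1) → ℝ) → A} (hU : IsOpen U) (hg : ContDiffOn ℝ ∞ g U)
    (s : Fin (p + 1)) : ContDiffOn ℝ ∞ (pdP p s g) U :=
  (fderiv_smooth hU hg).clm_apply contDiffOn_const

theorem TL_smooth {g : (Fin (p + 1) → ℝ) → A} (hU : IsOpen U) (hg : ContDiffOn ℝ ∞ g U)
    (L : Fin (p + 1) → A →L[ℝ] A) : ContDiffOn ℝ ∞ (TL L g) U :=
  ContDiffOn.sum fun s _ => (L s).contDiff.comp_contDiffOn (pdP_smooth hU hg s)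

theorem lapP_smooth {g : (Fin (p + 1) → ℝ) → A} (hU : IsOpen U) (hg : ContDiffOn ℝ ∞ g U) :
    ContDiffOn ℝ ∞ (lapP p g) U :=
  ContDiffOn.sum fun s _ => pdP_smooth hU (pdP_smooth hU hg s) s

theorem lapIterP_succ (k : ℕ) (g : (Fin (p + 1) → ℝ) → A) :
    lapIterP p (k + 1) g = lapP p (lapIterP p k g) := by
  simp only [lapIterP, Function.iterate_succ_apply']

theorem lapIterP_succ' (k : ℕ) (g : (Fin (p + 1) → ℝ) → A) :
    lapIterP p (k + 1) g = lapIterP p k (lapP p g) := by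
  simp only [lapIterP, Function.iterate_succ_apply]

theorem lapIterP_smooth {g : (Fin (p + 1) → ℝ) → A} (hU : IsOpen U) (hg : ContDiffOn ℝ ∞ g U)
    (k : ℕ) : ContDiffOn ℝ ∞ (lapIterP p k g) U := by
  induction k with
  | zero => exact hg
  | succ k ih => rw [lapIterP_succ]; exact lapP_smooth hU ih

theorem Bd.pdP {g : (Fin (p + 1) → ℝ) → A} {C B : ℝ} {n0 : ℕ} (hU : IsOpen U)
    (h : Bd g U C B n0) (s : Fin (p + 1)) : Bd (pdP p s g) U (C * B) B (n0 + 1) := by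
  refine ⟨pdP_smooth hU h.1 s, fun y hy n => ?_⟩
  have hc : ContDiffAt ℝ ∞ (fderiv ℝ g) y := (fderiv_smooth hU h.1).contDiffAt (hU.mem_nhds hy)
  have h1 := norm_iteratedFDeriv_clm_apply_const (c := (Pi.single s (1 : ℝ) : Fin (p + 1) → ℝ))
    (n := n) hc (by exact_mod_cast le_top)
  rw [norm_iteratedFDeriv_fderiv] at h1
  refine h1.trans ?_
  have h2 := h.2 y hy (n + 1)
  have : ‖(Pi.single s (1 : ℝ) : Fin (p + 1) → ℝ)‖ = 1 := by simp [Pi.norm_single]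
  rw [this, one_mul]
  refine h2.trans (le_of_eq ?_)
  rw [pow_succ, show n + 1 + n0 = n + (n0 + 1) by ring]
  ring

theorem Bd.sum {g : Fin (p + 1) → (Fin (p + 1) → ℝ) → A} {C : Fin (p + 1) → ℝ} {B : ℝ} {n0 : ℕ}
    (hU : IsOpen U) (h : ∀ s, Bd (g s) U (C s) B n0) :
    Bd (fun y => ∑ s, g s y) U (∑ s, C s) B n0 := by
  refine ⟨ContDiffOn.sum fun s _ => (h s).1, fun y hy n => ?_⟩
  rw [iteratedFDeriv_fun_sum_apply]
  · refine (norm_sum_le _ _).trans ?_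
    rw [Finset.sum_mul, Finset.sum_mul]
    exact Finset.sum_le_sum fun s _ => (h s).2 y hy n
  · intro s _
    exact ((h s).1.contDiffAt (hU.mem_nhds hy)).of_le (by exact_mod_cast le_top)

theorem Bd.clm {g : (Fin (p + 1) → ℝ) → A} {C B : ℝ} {n0 : ℕ} (hU : IsOpen U)
    (h : Bd g U C B n0) (L : A →L[ℝ] A) : Bd (fun y => L (g y)) U (‖L‖ * C) B n0 := by
  refine ⟨L.contDiff.comp_contDiffOn h.1, fun y hy n => ?_⟩
  have hc : ContDiffAt ℝ ∞ g y := h.1.contDiffAt (hU.mem_nhds hy)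
  have h1 := L.norm_iteratedFDeriv_comp_left (n := n) hc (by exact_mod_cast le_top)
  refine h1.trans ?_
  rw [mul_assoc, mul_assoc]
  gcongr
  rw [← mul_assoc]
  exact h.2 y hy n

theorem Bd.TL {g : (Fin (p + 1) → ℝ) → A} {C B : ℝ} {n0 : ℕ} (hU : IsOpen U)
    (h : Bd g U C B n0) (L : Fin (p + 1) → A →L[ℝ] A) :
    Bd (TL L g) U (∑ s, ‖L s‖ * (C * B)) B (n0 + 1) :=
  Bd.sum hU fun s => (h.pdP hU s).clm hU (L s)

theorem Bd.lapIter {g : (Fin (p + 1) → ℝ) → A} {C B : ℝ} {n0 : ℕ} (hU : IsOpen U)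
    (h : Bd g U C B n0) (k : ℕ) :
    Bd (lapIterP p k g) U (C * ((p + 1) * B ^ 2) ^ k) B (2 * k + n0) := by
  induction k with
  | zero => simpa [lapIterP] using h
  | succ k ih =>
    rw [lapIterP_succ]
    have := Bd.sum hU fun s => (ih.pdP hU s).pdP hU s
    convert! this using 1
    · simp only [Finset.sum_const, Finset.card_univ, Fintype.card_fin, nsmul_eq_mul]
      push_cast
      ring
    · ring

theorem pdP_congr {g h : (Fin (p + 1) → ℝ) → A} (hU : IsOpen U) (hgh : Set.EqOn g h U)
    (s : Fin (p + 1)) : Set.EqOn (pdP p s g) (pdP p s h) U := fun y hy => by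
  have : g =ᶠ[𝓝 y] h := Filter.eventuallyEq_of_mem (hU.mem_nhds hy) hgh
  simp only [GPSM.pdP, this.fderiv_eq]

theorem lapP_congr {g h : (Fin (p + 1) → ℝ) → A} (hU : IsOpen U) (hgh : Set.EqOn g h U) :
    Set.EqOn (lapP p g) (lapP p h) U := fun y hy =>
  Finset.sum_congr rfl fun s _ => pdP_congr hU (pdP_congr hU hgh s) s hy

theorem lapIterP_congr {g h : (Fin (p + 1) → ℝ) → A} (hU : IsOpen U) (hgh : Set.EqOn g h U)
    (k : ℕ) : Set.EqOn (lapIterP p k g) (lapIterP p k h) U := by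
  induction k with
  | zero => exact hgh
  | succ k ih => rw [lapIterP_succ, lapIterP_succ]; exact lapP_congr hU ih

theorem smooth_diffAt {F : Type*} [NormedAddCommGroup F] [NormedSpace ℝ F]
    {g : (Fin (p + 1) → ℝ) → F} (hU : IsOpen U) (hg : ContDiffOn ℝ ∞ g U)
    {y : Fin (p + 1) → ℝ} (hy : y ∈ U) : DifferentiableAt ℝ g y :=
  (hg.contDiffAt (hU.mem_nhds hy)).differentiableAt (by simp)

theorem pdP_comm {g : (Fin (p + 1) → ℝ) → A} (hU : IsOpen U) (hg : ContDiffOn ℝ ∞ g U)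
    (s t : Fin (p + 1)) : Set.EqOn (pdP p s (pdP p t g)) (pdP p t (pdP p s g)) U := fun y hy => by
  have hd : DifferentiableAt ℝ (fderiv ℝ g) y := smooth_diffAt hU (fderiv_smooth hU hg) hy
  have key : ∀ a b : Fin (p + 1), pdP p a (pdP p b g) y =
      fderiv ℝ (fderiv ℝ g) y (Pi.single a 1) (Pi.single b 1) := by
    intro a b
    have := (hd.hasFDerivAt.clm_apply (hasFDerivAt_const (Pi.single b (1:ℝ) : Fin (p + 1) → ℝ) y)).fderiv
    unfold GPSM.pdP
    rw [this]
    simp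
  rw [key, key]
  exact (hg.contDiffAt (hU.mem_nhds hy)).isSymmSndFDerivAt 
    (by rw [minSmoothness_of_isRCLikeNormedField]; exact WithTop.coe_le_coe.2 le_top) _ _

theorem pdP_sum {g : Fin (p + 1) → (Fin (p + 1) → ℝ) → A} (hU : IsOpen U)
    (hg : ∀ s, ContDiffOn ℝ ∞ (g s) U) (t : Fin (p + 1)) :
    Set.EqOn (pdP p t (fun y => ∑ s, g s y)) (fun y => ∑ s, pdP p t (g s) y) U := fun y hy => by
  unfold GPSM.pdP
  rw [fderiv_fun_sum fun s _ => smooth_diffAt hU (hg s) hy]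
  simp

theorem pdP_clm {g : (Fin (p + 1) → ℝ) → A} (hU : IsOpen U) (hg : ContDiffOn ℝ ∞ g U)
    (L : A →L[ℝ] A) (t : Fin (p + 1)) :
    Set.EqOn (pdP p t (fun y => L (g y))) (fun y => L (pdP p t g y)) U := fun y hy => by
  have := (L.hasFDerivAt.comp y (smooth_diffAt hU hg hy).hasFDerivAt).fderiv
  unfold GPSM.pdP
  simp only [Function.comp_def] at this
  rw [this]
  simp

theorem pdP_TL {g : (Fin (p + 1) → ℝ) → A} (hU : IsOpen U) (hg : ContDiffOn ℝ ∞ g U)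
    (L : Fin (p + 1) → A →L[ℝ] A) (t : Fin (p + 1)) :
    Set.EqOn (pdP p t (TL L g)) (TL L (pdP p t g)) U := fun y hy => by
  have h1 := pdP_sum hU (fun s => (L s).contDiff.comp_contDiffOn (pdP_smooth hU hg s)) t hy
  refine h1.trans (Finset.sum_congr rfl fun s _ => ?_)
  refine (pdP_clm hU (pdP_smooth hU hg s) (L s) t hy).trans ?_
  dsimp only
  rw [pdP_comm hU hg t s hy]

theorem TL_congr {g h : (Fin (p + 1) → ℝ) → A} (hU : IsOpen U) (hgh : Set.EqOn g h U)
    (L : Fin (p + 1) → A →L[ℝ] A) : Set.EqOn (TL L g) (TL L h) U := fun y hy =>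
  Finset.sum_congr rfl fun s _ => by rw [pdP_congr hU hgh s hy]

theorem lapP_TL {g : (Fin (p + 1) → ℝ) → A} (hU : IsOpen U) (hg : ContDiffOn ℝ ∞ g U)
    (L : Fin (p + 1) → A →L[ℝ] A) : Set.EqOn (lapP p (TL L g)) (TL L (lapP p g)) U := fun y hy => by
  have h1 : ∀ t, pdP p t (pdP p t (TL L g)) y = TL L (pdP p t (pdP p t g)) y := fun t =>
    (pdP_congr hU (pdP_TL hU hg L t) t hy).trans (pdP_TL hU (pdP_smooth hU hg t) L t hy)
  have h2 : ∀ s, pdP p s (lapP p g) y = ∑ t, pdP p s (pdP p t (pdP p t g)) y := fun s =>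
    pdP_sum hU (fun t => pdP_smooth hU (pdP_smooth hU hg t) t) s hy
  unfold lapP at h2 ⊢
  rw [Finset.sum_congr rfl fun t _ => h1 t]
  unfold GPSM.TL
  rw [Finset.sum_comm]
  refine Finset.sum_congr rfl fun s _ => ?_
  rw [h2, map_sum]

theorem lapIterP_TL {g : (Fin (p + 1) → ℝ) → A} (hU : IsOpen U) (hg : ContDiffOn ℝ ∞ g U)
    (L : Fin (p + 1) → A →L[ℝ] A) (k : ℕ) :
    Set.EqOn (lapIterP p k (TL L g)) (TL L (lapIterP p k g)) U := by
  induction k with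
  | zero => exact fun y _ => rfl
  | succ k ih =>
    rw [lapIterP_succ, lapIterP_succ]
    exact (lapP_congr hU ih).trans (lapP_TL hU (lapIterP_smooth hU hg k) L)

theorem TL_TL {g : (Fin (p + 1) → ℝ) → A} (hU : IsOpen U) (hg : ContDiffOn ℝ ∞ g U)
    (L L' : Fin (p + 1) → A →L[ℝ] A)
    (hL : ∀ s t a, L' s (L t a) + L' t (L s a) = if s = t then (2 : ℝ) • a else 0) :
    Set.EqOn (TL L' (TL L g)) (lapP p g) U := fun y hy => by
  have h1 : TL L' (TL L g) y = ∑ s, ∑ t, L' s (L t (pdP p s (pdP p t g) y)) := by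
    refine Finset.sum_congr rfl fun s _ => ?_
    rw [pdP_TL hU hg L s hy]
    unfold GPSM.TL
    rw [map_sum]
    refine Finset.sum_congr rfl fun t _ => ?_
    rw [pdP_comm hU hg s t hy]
  have h2 : (2 : ℝ) • TL L' (TL L g) y = (2 : ℝ) • lapP p g y := by
    have h1' := h1
    rw [Finset.sum_comm] at h1'
    rw [two_smul]
    nth_rewrite 2 [h1]
    rw [h1', ← Finset.sum_add_distrib]
    unfold lapP
    rw [Finset.smul_sum]
    refine Finset.sum_congr rfl fun s _ => ?_
    rw [← Finset.sum_add_distrib]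
    have : ∀ t ∈ (Finset.univ : Finset (Fin (p + 1))),
        L' t (L s (pdP p t (pdP p s g) y)) + L' s (L t (pdP p s (pdP p t g) y)) =
        if t = s then (2 : ℝ) • (pdP p s (pdP p s g) y) else 0 := by
      intro t _
      rw [pdP_comm hU hg s t hy, hL]
      split_ifs with h
      · rw [h]
      · rfl
    rw [Finset.sum_congr rfl this]
    simp
  exact smul_right_injective A (two_ne_zero : (2 : ℝ) ≠ 0) h2

end calculus


section series

open scoped ContDiff

/-- The coefficient `(-1)^k r^(2k+n₀)/(2k+n₀)!`. -/
noncomputable def co (n0 k : ℕ) (r : ℝ) : ℝ := ((-1 : ℝ) ^ k * r ^ (2 * k + n0)) / (2 * k + n0).factorial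

/-- The derivative of `co`. -/
noncomputable def co' (n0 k : ℕ) (r : ℝ) : ℝ :=
  ((-1 : ℝ) ^ k * (((2 * k + n0 : ℕ) : ℝ) * r ^ (2 * k + n0 - 1))) / (2 * k + n0).factorial

theorem co_hasDerivAt (n0 k : ℕ) (r : ℝ) : HasDerivAt (co n0 k) (co' n0 k r) r :=
  ((hasDerivAt_pow (2 * k + n0) r).const_mul _).div_const _

theorem co_bound (n0 k : ℕ) {r ε : ℝ} (h : |r| ≤ ε) (h1 : ε ≤ 1) :
    |co n0 k r| * (2 * k + n0).factorial ≤ (ε ^ 2) ^ k := by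
  have hε : 0 ≤ ε := (abs_nonneg r).trans h
  unfold co
  rw [abs_div, abs_mul, abs_pow, abs_neg, abs_one, one_pow, one_mul, Nat.abs_cast,
    div_mul_cancel₀ _ (by positivity), abs_pow, pow_add, pow_mul]
  calc (|r| ^ 2) ^ k * |r| ^ n0 ≤ (ε ^ 2) ^ k * 1 := by
        gcongr
        exact pow_le_one₀ (abs_nonneg r) (h.trans h1)
    _ = _ := mul_one _

theorem co'_bound (n0 k : ℕ) {r ε : ℝ} (h : |r| ≤ ε) (h1 : ε ≤ 1) (h0 : 0 < ε) :
    |co' n0 k r| * (2 * k + n0).factorial ≤ (2 * k + n0 : ℕ) * (ε ^ 2) ^ k / ε := by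
  unfold co'
  rw [abs_div, abs_mul, abs_pow, abs_neg, abs_one, one_pow, one_mul, Nat.abs_cast,
    div_mul_cancel₀ _ (by positivity), abs_mul, Nat.abs_cast, abs_pow, mul_div_assoc]
  rcases Nat.eq_zero_or_pos (2 * k + n0) with hz | hz
  · rw [hz]; simp
  · gcongr
    rw [le_div_iff₀ h0]
    calc |r| ^ (2 * k + n0 - 1) * ε ≤ ε ^ (2 * k + n0 - 1) * ε := by gcongr
      _ = ε ^ (2 * k + n0) := by rw [← pow_succ]; congr 1; omega
      _ = (ε ^ 2) ^ k * ε ^ n0 := by rw [pow_add, pow_mul]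
      _ ≤ (ε ^ 2) ^ k * 1 := by gcongr; exact pow_le_one₀ h0.le h1
      _ = _ := mul_one _

variable {p : ℕ}

theorem series_lemma [CompleteSpace A] {g : ℕ → (Fin (p + 1) → ℝ) → A} {U : Set (Fin (p + 1) → ℝ)}
    {C K B ε : ℝ} (n0 : ℕ) (hU : IsOpen U) (hUc : Convex ℝ U) (hε : 0 < ε) (hε1 : ε ≤ 1)
    (hK : 0 ≤ K) (hεK : ε ^ 2 * K ≤ 1 / 2) (hC : 0 ≤ C) (hB : 0 ≤ B)
    (hg : ∀ k, ContDiffOn ℝ ∞ (g k) U)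
    (hb : ∀ k, ∀ y ∈ U, ‖g k y‖ ≤ C * K ^ k * (2 * k + n0).factorial)
    (hb' : ∀ k, ∀ y ∈ U, ‖fderiv ℝ (g k) y‖ ≤ C * K ^ k * B * (2 * k + n0 + 1).factorial) :
    (∃ c : ℕ → ℝ, Summable c ∧ ∀ k, ∀ y ∈ U, ∀ r : ℝ, |r| < ε → ‖co n0 k r • g k y‖ ≤ c k) ∧
    ContDiffOn ℝ 1 (fun z : (Fin (p + 1) → ℝ) × ℝ => ∑' k, co n0 k z.2 • g k z.1)
      (U ×ˢ Metric.ball 0 ε) ∧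
    ∀ z ∈ U ×ˢ Metric.ball (0 : ℝ) ε,
      (∀ s, HasSum (fun k => co n0 k z.2 • pdP p s (g k) z.1)
        (pdSx p s (fun z : (Fin (p + 1) → ℝ) × ℝ => ∑' k, co n0 k z.2 • g k z.1) z)) ∧
      HasSum (fun k => co' n0 k z.2 • g k z.1)
        (pdSr p (fun z : (Fin (p + 1) → ℝ) × ℝ => ∑' k, co n0 k z.2 • g k z.1) z) := by
  set S := U ×ˢ Metric.ball (0 : ℝ) ε with hS
  have hSo : IsOpen S := hU.prod Metric.isOpen_ball
  have hSc : IsPreconnected S := (hUc.prod (convex_ball _ _)).isPreconnected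
  have hpow : ∀ k : ℕ, (ε ^ 2) ^ k * K ^ k ≤ (1 / 2) ^ k := fun k => by
    rw [← mul_pow]; gcongr
  set c : ℕ → ℝ := fun k => C * (1 / 2) ^ k with hc
  set d : ℕ → ℝ := fun k => (C * B * (2 * k + n0 + 1) + C / ε * (2 * k + n0)) * (1 / 2) ^ k with hd
  have hcs : Summable c := (summable_geometric_two).mul_left C
  have hds : Summable d := by
    have h1 : Summable (fun k : ℕ => (k : ℝ) ^ 1 * (1 / 2 : ℝ) ^ k) :=
      summable_pow_mul_geometric_of_norm_lt_one 1 (by norm_num)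
    have h2 : Summable (fun k : ℕ => (1 / 2 : ℝ) ^ k) := summable_geometric_two
    refine ((h1.mul_left (2 * C * B + 2 * (C / ε))).add
      (h2.mul_left (C * B * (n0 + 1) + C / ε * n0))).congr fun k => ?_
    simp only [hd]; ring
  have hcb : ∀ k, ∀ y ∈ U, ∀ r : ℝ, |r| < ε → ‖co n0 k r • g k y‖ ≤ c k := by
    intro k y hy r hr
    rw [norm_smul, Real.norm_eq_abs]
    calc |co n0 k r| * ‖g k y‖ ≤ |co n0 k r| * (C * K ^ k * (2 * k + n0).factorial) := by
          gcongr; exact hb k y hy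
      _ = C * ((|co n0 k r| * (2 * k + n0).factorial) * K ^ k) := by ring
      _ ≤ C * ((ε ^ 2) ^ k * K ^ k) := by gcongr; exact co_bound n0 k hr.le hε1
      _ ≤ C * (1 / 2) ^ k := by gcongr; exact hpow k
  set f' : ℕ → (Fin (p + 1) → ℝ) × ℝ → ((Fin (p + 1) → ℝ) × ℝ →L[ℝ] A) := fun k z =>
    co n0 k z.2 • (fderiv ℝ (g k) z.1).comp (ContinuousLinearMap.fst ℝ (Fin (p + 1) → ℝ) ℝ) +
      (co' n0 k z.2 • ContinuousLinearMap.snd ℝ (Fin (p + 1) → ℝ) ℝ).smulRight (g k z.1) with hf'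
  have hder : ∀ k, ∀ z ∈ S, HasFDerivAt
      (fun z : (Fin (p + 1) → ℝ) × ℝ => co n0 k z.2 • g k z.1) (f' k z) z := by
    intro k z hz
    have h1 : HasFDerivAt (fun z : (Fin (p + 1) → ℝ) × ℝ => co n0 k z.2)
        (co' n0 k z.2 • ContinuousLinearMap.snd ℝ (Fin (p + 1) → ℝ) ℝ) z :=
      (co_hasDerivAt n0 k z.2).comp_hasFDerivAt z hasFDerivAt_snd
    have h2 : HasFDerivAt (fun z : (Fin (p + 1) → ℝ) × ℝ => g k z.1)
        ((fderiv ℝ (g k) z.1).comp (ContinuousLinearMap.fst ℝ (Fin (p + 1) → ℝ) ℝ)) z :=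
      (smooth_diffAt hU (hg k) hz.1).hasFDerivAt.comp z hasFDerivAt_fst
    exact h1.smul h2
  have hbound : ∀ k, ∀ z ∈ S, ‖f' k z‖ ≤ d k := by
    intro k z hz
    have hr : |z.2| < ε := by simpa using hz.2
    have e1 : ‖co n0 k z.2 • (fderiv ℝ (g k) z.1).comp
        (ContinuousLinearMap.fst ℝ (Fin (p + 1) → ℝ) ℝ)‖ ≤
        C * B * (2 * k + n0 + 1) * (1 / 2) ^ k := by
      rw [norm_smul, Real.norm_eq_abs]
      calc _ ≤ |co n0 k z.2| * (‖fderiv ℝ (g k) z.1‖ * 1) := by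
            gcongr
            refine (ContinuousLinearMap.opNorm_comp_le _ _).trans ?_
            gcongr
            exact ContinuousLinearMap.norm_fst_le _ _ _
        _ ≤ |co n0 k z.2| * (C * K ^ k * B * (2 * k + n0 + 1).factorial * 1) := by
            gcongr; exact hb' k _ hz.1
        _ = C * B * (2 * k + n0 + 1) * ((|co n0 k z.2| * (2 * k + n0).factorial) * K ^ k) := by
            rw [Nat.factorial_succ]; push_cast; ring
        _ ≤ C * B * (2 * k + n0 + 1) * ((ε ^ 2) ^ k * K ^ k) := by
            gcongr; exact co_bound n0 k hr.le hε1
        _ ≤ _ := by gcongr; exact hpow k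
    have e2 : ‖(co' n0 k z.2 • ContinuousLinearMap.snd ℝ (Fin (p + 1) → ℝ) ℝ).smulRight (g k z.1)‖ ≤
        C / ε * (2 * k + n0) * (1 / 2) ^ k := by
      rw [ContinuousLinearMap.norm_smulRight_apply, norm_smul, Real.norm_eq_abs]
      calc _ ≤ |co' n0 k z.2| * 1 * (C * K ^ k * (2 * k + n0).factorial) := by
            gcongr
            · exact ContinuousLinearMap.norm_snd_le _ _ _
            · exact hb k _ hz.1
        _ = C * ((|co' n0 k z.2| * (2 * k + n0).factorial) * K ^ k) := by ring
        _ ≤ C * (((2 * k + n0 : ℕ) * (ε ^ 2) ^ k / ε) * K ^ k) := by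
            gcongr; exact co'_bound n0 k hr.le hε1 hε
        _ = C / ε * (2 * k + n0) * ((ε ^ 2) ^ k * K ^ k) := by push_cast; ring
        _ ≤ _ := by gcongr; exact hpow k
    refine (norm_add_le _ _).trans ((add_le_add e1 e2).trans (le_of_eq ?_))
    simp only [hd]; ring
  have hsum0 : ∀ z ∈ S, Summable fun k => co n0 k z.2 • g k z.1 := fun z hz =>
    .of_norm_bounded hcs fun k => hcb k _ hz.1 _ (by simpa using hz.2)
  have hmain : ∀ z ∈ S, HasFDerivAt
      (fun z : (Fin (p + 1) → ℝ) × ℝ => ∑' k, co n0 k z.2 • g k z.1) (∑' k, f' k z) z :=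
    fun z hz => hasFDerivAt_tsum_of_isPreconnected hds hSo hSc hder hbound hz (hsum0 z hz) hz
  have hsum' : ∀ z ∈ S, HasSum (fun k => f' k z) (∑' k, f' k z) := fun z hz =>
    (Summable.of_norm_bounded hds fun k => hbound k z hz).hasSum
  have happ : ∀ z ∈ S, ∀ w, HasSum (fun k => f' k z w)
      (fderiv ℝ (fun z : (Fin (p + 1) → ℝ) × ℝ => ∑' k, co n0 k z.2 • g k z.1) z w) := by
    intro z hz w
    rw [(hmain z hz).fderiv]
    exact (hsum' z hz).mapL (ContinuousLinearMap.apply ℝ A w)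
  refine ⟨⟨c, hcs, hcb⟩, ?_, fun z hz => ⟨fun s => ?_, ?_⟩⟩
  · have hcont : ∀ k, ContinuousOn (f' k) S := by
      intro k
      have c1 : ContinuousOn (fun z : (Fin (p + 1) → ℝ) × ℝ => fderiv ℝ (g k) z.1) S :=
        (fderiv_smooth hU (hg k)).continuousOn.comp continuousOn_fst fun z hz => hz.1
      have c2 : ContinuousOn (fun z : (Fin (p + 1) → ℝ) × ℝ => g k z.1) S :=
        (hg k).continuousOn.comp continuousOn_fst fun z hz => hz.1
      have c3 : Continuous (co n0 k) := by unfold co; fun_prop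
      have c4 : Continuous (co' n0 k) := by unfold co'; fun_prop
      refine ContinuousOn.add ?_ ?_
      · exact (c3.comp continuous_snd).continuousOn.smul (c1.clm_comp continuousOn_const)
      · have : Continuous fun z : (Fin (p + 1) → ℝ) × ℝ =>
          co' n0 k z.2 • ContinuousLinearMap.snd ℝ (Fin (p + 1) → ℝ) ℝ := by fun_prop
        exact ((ContinuousLinearMap.smulRightL ℝ ((Fin (p + 1) → ℝ) × ℝ) A).continuous.comp_continuousOn
          this.continuousOn).clm_apply c2
    have h01 : (1 : WithTop ℕ∞) = 0 + 1 := by simp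
    rw [h01, contDiffOn_succ_iff_fderiv_of_isOpen hSo]
    refine ⟨fun z hz => (hmain z hz).differentiableAt.differentiableWithinAt, by simp, ?_⟩
    rw [contDiffOn_zero]
    exact (continuousOn_tsum hcont hds hbound).congr fun z hz => (hmain z hz).fderiv
  · have := happ z hz (Pi.single s 1, 0)
    simpa [hf', pdSx, GPSM.pdP] using this
  · have := happ z hz (0, 1)
    simpa [hf', pdSr] using this

end series


section localext

open scoped ContDiff

theorem co'_one (k : ℕ) (r : ℝ) : co' 1 k r = co 0 k r := by
  unfold co' co
  have : 2 * k + 1 - 1 = 2 * k + 0 := by omega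
  rw [this, Nat.factorial_succ]
  simp only [add_zero]
  push_cast
  field_simp

theorem co'_zero_zero (r : ℝ) : co' 0 0 r = 0 := by simp [co']

theorem co'_zero_succ (k : ℕ) (r : ℝ) : co' 0 (k + 1) r = - co 1 k r := by
  unfold co' co
  have h1 : 2 * (k + 1) + 0 - 1 = 2 * k + 1 := by omega
  have h2 : 2 * (k + 1) + 0 = (2 * k + 1) + 1 := by omega
  rw [h1, h2, Nat.factorial_succ (2 * k + 1)]
  push_cast
  field_simp
  ring

variable {p : ℕ}

theorem local_ext [CompleteSpace A] {Ω₀ : Set (Fin (p + 1) → ℝ)} (hΩ₀ : IsOpen Ω₀)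
    {f₀ : (Fin (p + 1) → ℝ) → A} (hf₀ : AnalyticOnNhd ℝ f₀ Ω₀)
    (L L' : Fin (p + 1) → A →L[ℝ] A)
    (hL : ∀ s t a, L' s (L t a) + L' t (L s a) = if s = t then (2 : ℝ) • a else 0)
    {x0 : Fin (p + 1) → ℝ} (hx0 : x0 ∈ Ω₀) :
    ∃ ε > 0, Metric.ball x0 ε ⊆ Ω₀ ∧
    (∃ c : ℕ → ℝ, Summable c ∧ ∀ k, ∀ y ∈ Metric.ball x0 ε, ∀ r : ℝ, |r| < ε →
      ‖co 0 k r • lapIterP p k f₀ y‖ ≤ c k) ∧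
    (∃ c : ℕ → ℝ, Summable c ∧ ∀ k, ∀ y ∈ Metric.ball x0 ε, ∀ r : ℝ, |r| < ε →
      ‖co 1 k r • lapIterP p k (TL L f₀) y‖ ≤ c k) ∧
    ContDiffOn ℝ 1 (fun z : (Fin (p + 1) → ℝ) × ℝ => ∑' k, co 0 k z.2 • lapIterP p k f₀ z.1)
      (Metric.ball x0 ε ×ˢ Metric.ball 0 ε) ∧
    ContDiffOn ℝ 1
      (fun z : (Fin (p + 1) → ℝ) × ℝ => ∑' k, co 1 k z.2 • lapIterP p k (TL L f₀) z.1)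
      (Metric.ball x0 ε ×ˢ Metric.ball 0 ε) ∧
    ∀ z ∈ Metric.ball x0 ε ×ˢ Metric.ball (0 : ℝ) ε,
      ∑ s, L s (pdSx p s
        (fun z : (Fin (p + 1) → ℝ) × ℝ => ∑' k, co 0 k z.2 • lapIterP p k f₀ z.1) z) =
      pdSr p (fun z : (Fin (p + 1) → ℝ) × ℝ => ∑' k, co 1 k z.2 • lapIterP p k (TL L f₀) z.1) z ∧
      ∑ s, L' s (pdSx p s
        (fun z : (Fin (p + 1) → ℝ) × ℝ => ∑' k, co 1 k z.2 • lapIterP p k (TL L f₀) z.1) z) =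
      - pdSr p (fun z : (Fin (p + 1) → ℝ) × ℝ => ∑' k, co 0 k z.2 • lapIterP p k f₀ z.1) z := by
  obtain ⟨ε1, hε1, C, hC, B, hB, hbd⟩ := cauchy_bound (hf₀ x0 hx0)
  obtain ⟨ε2, hε2, hsub⟩ := Metric.isOpen_iff.1 hΩ₀ x0 hx0
  set K : ℝ := (p + 1) * B ^ 2 with hKdef
  have hK : 0 ≤ K := by positivity
  set ε := min (min ε1 ε2) (min 1 (1 / (2 * (K + 1)))) with hεdef
  have hε : 0 < ε := by
    have : 0 < 1 / (2 * (K + 1)) := by positivity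
    simp only [hεdef, lt_min_iff]
    exact ⟨⟨hε1, hε2⟩, one_pos, this⟩
  have hεl1 : ε ≤ ε1 := (min_le_left _ _).trans (min_le_left _ _)
  have hεl2 : ε ≤ ε2 := (min_le_left _ _).trans (min_le_right _ _)
  have hεone : ε ≤ 1 := (min_le_right _ _).trans (min_le_left _ _)
  have hεK' : ε ≤ 1 / (2 * (K + 1)) := (min_le_right _ _).trans (min_le_right _ _)
  have hεK : ε ^ 2 * K ≤ 1 / 2 := by
    have h1 : ε * (2 * (K + 1)) ≤ 1 := by rwa [le_div_iff₀ (by positivity)] at hεK'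
    have h2 : ε ^ 2 * K ≤ ε * K := by
      gcongr
      nlinarith
    nlinarith
  set U := Metric.ball x0 ε with hUdef
  have hU : IsOpen U := Metric.isOpen_ball
  have hUc : Convex ℝ U := convex_ball _ _
  have hUsub : U ⊆ Ω₀ := (Metric.ball_subset_ball hεl2).trans hsub
  have hsm : ContDiffOn ℝ ∞ f₀ U := fun y hy =>
    (hf₀ y (hUsub hy)).contDiffAt.contDiffWithinAt
  have hB0 : Bd f₀ U C B 0 := ⟨hsm, fun y hy n => hbd y (Metric.ball_subset_ball hεl1 hy) n⟩
  have hB1 := hB0.TL hU L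
  have hC1 : 0 ≤ ∑ s, ‖L s‖ * (C * B) := Finset.sum_nonneg fun s _ => by positivity
  have hsm1 := hB1.1
  have conv : ∀ {g : (Fin (p + 1) → ℝ) → A} {C : ℝ} {n0 : ℕ}, Bd g U C B n0 →
      (∀ k, ∀ y ∈ U, ‖lapIterP p k g y‖ ≤ C * K ^ k * (2 * k + n0).factorial) ∧
      (∀ k, ∀ y ∈ U, ‖fderiv ℝ (lapIterP p k g) y‖ ≤
        C * K ^ k * B * (2 * k + n0 + 1).factorial) := by
    intro g C n0 h
    refine ⟨fun k y hy => ?_, fun k y hy => ?_⟩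
    · have := (h.lapIter hU k).2 y hy 0
      simpa [norm_iteratedFDeriv_zero] using this
    · have := (h.lapIter hU k).2 y hy 1
      rw [norm_iteratedFDeriv_one, pow_one, add_comm 1] at this
      exact this
  obtain ⟨c0, c0'⟩ := conv hB0
  obtain ⟨c1, c1'⟩ := conv hB1
  obtain ⟨a1, a2, a3⟩ := series_lemma 0 hU hUc hε hεone hK hεK hC hB.le
    (fun k => lapIterP_smooth hU hsm k) c0 c0'
  obtain ⟨b1, b2, b3⟩ := series_lemma 1 hU hUc hε hεone hK hεK hC1 hB.le
    (fun k => lapIterP_smooth hU hsm1 k) c1 c1'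
  refine ⟨ε, hε, hUsub, a1, b1, a2, b2, fun z hz => ⟨?_, ?_⟩⟩
  · have h1 := hasSum_sum (s := Finset.univ) fun s _ => ((a3 z hz).1 s).mapL (L s)
    refine h1.unique ?_
    refine ((b3 z hz).2).congr_fun fun k => ?_
    rw [co'_one, lapIterP_TL hU hsm L k hz.1]
    simp [TL, Finset.smul_sum]
  · have h1 := hasSum_sum (s := Finset.univ) fun s _ => ((b3 z hz).1 s).mapL (L' s)
    refine h1.unique ?_
    have h2 := (hasSum_nat_add_iff' 1).2 (a3 z hz).2
    simp only [Finset.range_one, Finset.sum_singleton, co'_zero_zero, zero_smul, sub_zero] at h2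
    refine h2.neg.congr_fun fun k => ?_
    rw [co'_zero_succ, neg_smul, neg_neg, lapIterP_succ']
    have e1 : TL L' (lapIterP p k (TL L f₀)) z.1 = lapIterP p k (lapP p f₀) z.1 :=
      (lapIterP_TL hU hsm1 L' k hz.1).symm.trans
        (lapIterP_congr hU (TL_TL hU hsm L L' hL) k hz.1)
    rw [← e1]
    simp [TL, Finset.smul_sum]

end localext

section algebra

variable {conj : A → A}

theorem exists_mulL (H : IsAltStarAlg A conj) : ∃ M : A → A →L[ℝ] A, ∀ a b, M a b = a * b := by
  haveI := H.finDim
  exact ⟨fun a => LinearMap.toContinuousLinearMap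
    { toFun := fun b => a * b
      map_add' := H.mul_add' a
      map_smul' := fun r b => H.mul_smul' r a b }, fun a b => rfl⟩

theorem IsAltStarAlg.mul_neg' (H : IsAltStarAlg A conj) (a b : A) : a * (-b) = -(a * b) := by
  have := H.mul_smul' (-1) a b
  simpa using this

theorem IsAltStarAlg.neg_mul' (H : IsAltStarAlg A conj) (a b : A) : (-a) * b = -(a * b) := by
  have := H.smul_mul' (-1) a b
  simpa using this

theorem IsAltStarAlg.anti (H : IsAltStarAlg A conj) {a b : A} (h : a * b = -(b * a)) (c : A) :
    a * (b * c) + b * (a * c) = 0 := by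
  have h1 := H.alt_left (a + b) c
  simp only [H.mul_add', H.add_mul', H.alt_left a c, H.alt_left b c, h, H.neg_mul'] at h1
  have h2 : a * (b * c) + b * (a * c) =
    (a * a * c + b * (a * c) + (a * (b * c) + b * b * c)) - (a * a * c + b * b * c) := by abel
  rw [h2, h1]
  abel

theorem IsAltStarAlg.sq (H : IsAltStarAlg A conj) {a : A} (h : a * a = -1) (c : A) :
    a * (a * c) = -c := by
  rw [H.alt_left, h, H.neg_mul', H.one_mul']

theorem v_sq (H : IsAltStarAlg A conj) {v : ℕ → A} {m : ℕ} (hv : IsHypBasis A conj v m) {s : ℕ}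
    (h1 : 1 ≤ s) (h2 : s ≤ m) : v s * v s = -1 := by
  have e := hv.norm_one s h1 h2
  rw [show conj (v s) = -v s from (neg_eq_of_add_eq_zero_right (hv.trace_zero s h1 h2)).symm,
    H.mul_neg'] at e
  rw [← e, neg_neg]

theorem one_ne (H : IsAltStarAlg A conj) : (1 : A) ≠ 0 := by
  intro h
  have hz : ∀ a : A, a = 0 := fun a => by
    have := H.smul_mul' 0 a a
    have h2 := H.one_mul' a
    rw [h] at h2
    rw [← h2]
    simpa using H.smul_mul' 0 a a
  have : Subsingleton A := ⟨fun a b => (hz a).trans (hz b).symm⟩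
  have h1 := H.one_lt_finrank
  rw [Module.finrank_zero_of_subsingleton] at h1
  omega

theorem emb_sq (H : IsAltStarAlg A conj) {v : ℕ → A} {m : ℕ} (hv : IsHypBasis A conj v m)
    {w : Fin (m + 1) → ℝ} (hw : w 0 = 0) :
    emb v m w * emb v m w = (∑ s, w s ^ 2) • (-1 : A) := by
  obtain ⟨M, hM⟩ := exists_mulL H
  have hr : ∀ (b : A) (x : Fin (m + 1) → A), (∑ s, x s) * b = ∑ s, x s * b := by
    intro b x
    let φ : A →+ A := { toFun := fun a => a * b, map_zero' := by
                          simpa using H.smul_mul' 0 b b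
                        map_add' := fun a a' => H.add_mul' a a' b }
    exact map_sum φ x _
  have h1 : emb v m w * emb v m w = ∑ s, ∑ t, (w s * w t) • (v s * v t) := by
    have he : emb v m w = ∑ s : Fin (m + 1), w s • v (s : ℕ) := rfl
    nth_rewrite 1 [he]
    rw [hr]
    refine Finset.sum_congr rfl fun s _ => ?_
    rw [← hM, he, map_sum]
    refine Finset.sum_congr rfl fun t _ => ?_
    rw [hM, H.smul_mul', H.mul_smul', smul_smul]
  have h2 : (2 : ℝ) • (emb v m w * emb v m w) = (2 : ℝ) • ((∑ s, w s ^ 2) • (-1 : A)) := by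
    have h1' := h1
    rw [Finset.sum_comm] at h1'
    rw [two_smul]
    nth_rewrite 2 [h1]
    rw [h1', ← Finset.sum_add_distrib, Finset.sum_smul, Finset.smul_sum]
    refine Finset.sum_congr rfl fun s _ => ?_
    rw [← Finset.sum_add_distrib]
    have : ∀ t ∈ (Finset.univ : Finset (Fin (m + 1))),
        (w t * w s) • (v t * v s) + (w s * w t) • (v s * v t) =
        if t = s then (2 : ℝ) • (w s ^ 2) • (-1 : A) else 0 := by
      intro t _
      by_cases hs : s = 0
      · subst hs; simp [hw]
      by_cases ht : t = 0
      · subst ht; simp [hw, Ne.symm hs]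
      have hs1 : 1 ≤ (s : ℕ) := Nat.one_le_iff_ne_zero.2 fun h => hs (Fin.ext h)
      have ht1 : 1 ≤ (t : ℕ) := Nat.one_le_iff_ne_zero.2 fun h => ht (Fin.ext h)
      have hs2 : (s : ℕ) ≤ m := Nat.lt_succ_iff.1 s.2
      have ht2 : (t : ℕ) ≤ m := Nat.lt_succ_iff.1 t.2
      split_ifs with h
      · subst h
        rw [v_sq H hv ht1 ht2, two_smul, pow_two]
      · rw [hv.anticomm t s ht1 ht2 hs1 hs2 (fun e => h (Fin.ext e)), mul_comm (w t), smul_neg]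
        exact neg_add_cancel _
    rw [Finset.sum_congr rfl this]
    simp
  exact smul_right_injective A (two_ne_zero : (2 : ℝ) ≠ 0) h2

theorem Sph_norm (H : IsAltStarAlg A conj) {v : ℕ → A} {m p : ℕ} (hv : IsHypBasis A conj v m)
    {w : Fin (m + 1) → ℝ} (hw : w ∈ Sph v m p) : ∑ s, w s ^ 2 = 1 := by
  have h := emb_sq H hv (hw.1 0 (by simp))
  rw [hw.2] at h
  have h2 : ((∑ s, w s ^ 2) - 1 : ℝ) • (1 : A) = 0 := by
    rw [sub_smul, one_smul, sub_eq_zero]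
    rw [smul_neg] at h
    exact (neg_injective h).symm
  rcases smul_eq_zero.1 h2 with h3 | h3
  · linarith
  · exact absurd h3 (one_ne H)

/-- Elements of `𝕊` anticommute with `v_s`, `1 ≤ s ≤ p`. -/
theorem Sph_anti (H : IsAltStarAlg A conj) {v : ℕ → A} {m p : ℕ} (hv : IsHypBasis A conj v m)
    {w : Fin (m + 1) → ℝ} (hw : w ∈ Sph v m p) {s : ℕ} (h1 : 1 ≤ s) (hsp : s ≤ p) (hp : p < m)
    (c : A) : v s * (emb v m w * c) = -(emb v m w * (v s * c)) := by
  obtain ⟨M, hM⟩ := exists_mulL H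
  refine eq_neg_of_add_eq_zero_left (H.anti ?_ c)
  have hr : ∀ (b : A) (x : Fin (m + 1) → A), (∑ s, x s) * b = ∑ s, x s * b := by
    intro b x
    let φ : A →+ A := { toFun := fun a => a * b, map_zero' := by
                          simpa using H.smul_mul' 0 b b
                        map_add' := fun a a' => H.add_mul' a a' b }
    exact map_sum φ x _
  rw [emb, hr, ← hM, map_sum, ← Finset.sum_neg_distrib]
  refine Finset.sum_congr rfl fun t _ => ?_
  rw [hM, H.mul_smul', H.smul_mul']
  by_cases ht : (t : ℕ) ≤ p
  · rw [hw.1 t ht]; simp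
  · rw [hv.anticomm s t h1 (by omega) (by omega) (by omega) (by omega), smul_neg]

end algebra

section coords
variable {m p : ℕ}

theorem projP_pt (hp : p < m) {w : Fin (m + 1) → ℝ} (hw : ∀ s : Fin (m + 1), (s : ℕ) ≤ p → w s = 0)
    (y : Fin (p + 1) → ℝ) (r : ℝ) : projP m p (pt m p w y r) = y := by
  funext s
  have h1 : (s : ℕ) < m + 1 := by have := s.2; omega
  have h2 : (s : ℕ) ≤ p := by have := s.2; omega
  simp [projP, pt, injP, h1, hw ⟨s, h1⟩ h2]
  intro h; omega

theorem xqpart_pt {w : Fin (m + 1) → ℝ} (hw : ∀ s : Fin (m + 1), (s : ℕ) ≤ p → w s = 0)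
    (y : Fin (p + 1) → ℝ) (r : ℝ) : xqpart m p (pt m p w y r) = r • w := by
  funext s
  by_cases h : (s : ℕ) ≤ p
  · simp [xqpart, h, hw s h]
  · have h' : ¬ (s : ℕ) < p + 1 := by omega
    simp [xqpart, h, pt, injP, h']

theorem rad_of_xq {x w : Fin (m + 1) → ℝ} (hw : ∑ s, w s ^ 2 = 1) {r : ℝ}
    (h : xqpart m p x = r • w) : rad m p x = |r| := by
  rw [rad, h]
  simp only [Pi.smul_apply, smul_eq_mul, mul_pow]
  rw [← Finset.mul_sum, hw, mul_one, Real.sqrt_sq_eq_abs]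

theorem xppart_eq (x : Fin (m + 1) → ℝ) : xppart m p x = injP m p (projP m p x) := by
  funext s
  by_cases h : (s : ℕ) ≤ p
  · have h' : (s : ℕ) < p + 1 := by omega
    simp [xppart, injP, projP, h, h', s.2]
  · have h' : ¬ (s : ℕ) < p + 1 := by omega
    simp [xppart, injP, h, h']

theorem injP_eq_pt (y : Fin (p + 1) → ℝ) : injP m p y = pt m p 0 y 0 := by
  simp [pt]

theorem projP_injP (hp : p < m) (y : Fin (p + 1) → ℝ) : projP m p (injP m p y) = y := by
  rw [injP_eq_pt]; exact projP_pt hp (by simp) y 0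

theorem xqpart_injP (y : Fin (p + 1) → ℝ) : xqpart m p (injP m p y) = 0 := by
  rw [injP_eq_pt, xqpart_pt (by simp)]; simp

theorem rad_injP (y : Fin (p + 1) → ℝ) : rad m p (injP m p y) = 0 := by
  rw [rad, xqpart_injP]; simp

theorem rad_nonneg (x : Fin (m + 1) → ℝ) : 0 ≤ rad m p x := Real.sqrt_nonneg _

theorem continuous_projP : Continuous (projP m p) := by
  refine continuous_pi fun s => ?_
  unfold projP
  split_ifs
  · exact continuous_apply _
  · exact continuous_const

theorem continuous_injP : Continuous (injP m p) := by
  refine continuous_pi fun s => ?_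
  unfold injP
  split_ifs
  · exact continuous_apply _
  · exact continuous_const

theorem continuous_rad : Continuous (rad m p) := by
  refine Real.continuous_sqrt.comp (continuous_finsetSum _ fun s _ => Continuous.pow ?_ 2)
  unfold xqpart
  split_ifs
  · exact continuous_const
  · exact continuous_apply _

theorem projP_seg (hp : p < m) (x : Fin (m + 1) → ℝ) (a b : ℝ) (hab : a + b = 1) :
    projP m p (a • x + b • xppart m p x) = projP m p x := by
  funext s
  have h1 : (s : ℕ) < m + 1 := by have := s.2; omega
  have h2 : (s : ℕ) ≤ p := by have := s.2; omega
  simp only [projP, h1, xppart, h2, dite_true, Pi.add_apply, Pi.smul_apply, smul_eq_mul, if_true]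
  rw [← add_mul, hab, one_mul]

theorem rad_seg (x : Fin (m + 1) → ℝ) (a b : ℝ) :
    rad m p (a • x + b • xppart m p x) = |a| * rad m p x := by
  have h : xqpart m p (a • x + b • xppart m p x) = a • xqpart m p x := by
    funext s
    by_cases h : (s : ℕ) ≤ p <;> simp [xqpart, xppart, h]
  rw [rad, rad, h]
  simp only [Pi.smul_apply, smul_eq_mul, mul_pow]
  rw [← Finset.mul_sum, Real.sqrt_mul (sq_nonneg a), Real.sqrt_sq_eq_abs]

end coords

/-- The domain built from a radius function. -/
def OmE (m p : ℕ) (Ω₀ : Set (Fin (p + 1) → ℝ)) (ε : (Fin (p + 1) → ℝ) → ℝ) :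
    Set (Fin (m + 1) → ℝ) :=
  {x | ∃ y0 ∈ Ω₀, projP m p x ∈ Metric.ball y0 (ε y0) ∧ rad m p x < ε y0}

section domain
variable {m p : ℕ} {Ω₀ : Set (Fin (p + 1) → ℝ)} {ε : (Fin (p + 1) → ℝ) → ℝ}

theorem isOpen_box (y0 : Fin (p + 1) → ℝ) (e : ℝ) :
    IsOpen {x : Fin (m + 1) → ℝ | projP m p x ∈ Metric.ball y0 e ∧ rad m p x < e} :=
  (Metric.isOpen_ball.preimage continuous_projP).inter
    (isOpen_Iio.preimage continuous_rad)

theorem isOpen_OmE : IsOpen (OmE m p Ω₀ ε) := by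
  have : OmE m p Ω₀ ε = ⋃ y0 ∈ Ω₀,
      {x : Fin (m + 1) → ℝ | projP m p x ∈ Metric.ball y0 (ε y0) ∧ rad m p x < ε y0} := by
    ext x; simp only [OmE, Set.mem_iUnion, exists_prop]; rfl
  rw [this]
  exact isOpen_biUnion fun y0 _ => isOpen_box y0 _

theorem injP_mem_OmE (hp : p < m) (hε : ∀ y ∈ Ω₀, 0 < ε y) {y : Fin (p + 1) → ℝ} (hy : y ∈ Ω₀) :
    injP m p y ∈ OmE m p Ω₀ ε := by
  refine ⟨y, hy, ?_, ?_⟩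
  · rw [projP_injP hp]; exact Metric.mem_ball_self (hε y hy)
  · rw [rad_injP]; exact hε y hy

theorem projP_mem (hsub : ∀ y ∈ Ω₀, Metric.ball y (ε y) ⊆ Ω₀) {x : Fin (m + 1) → ℝ}
    (hx : x ∈ OmE m p Ω₀ ε) : projP m p x ∈ Ω₀ := by
  obtain ⟨y0, h0, h1, -⟩ := hx
  exact hsub y0 h0 h1

theorem isConnected_OmE (hp : p < m) (hε : ∀ y ∈ Ω₀, 0 < ε y)
    (hsub : ∀ y ∈ Ω₀, Metric.ball y (ε y) ⊆ Ω₀) (hc : IsConnected Ω₀) :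
    IsConnected (OmE m p Ω₀ ε) := by
  obtain ⟨y1, hy1⟩ := hc.nonempty
  refine ⟨⟨_, injP_mem_OmE hp hε hy1⟩, isPreconnected_of_forall (injP m p y1) fun x hx => ?_⟩
  have hx0 := projP_mem hsub hx
  refine ⟨injP m p '' Ω₀ ∪ segment ℝ x (xppart m p x), ?_, Or.inl ⟨y1, hy1, rfl⟩,
    Or.inr (left_mem_segment _ _ _), ?_⟩
  · refine Set.union_subset ?_ ?_
    · rintro _ ⟨y, hy, rfl⟩; exact injP_mem_OmE hp hε hy
    · rintro _ ⟨a, b, ha, hb, hab, rfl⟩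
      obtain ⟨y0, h0, h1, h2⟩ := hx
      refine ⟨y0, h0, ?_, ?_⟩
      · rw [projP_seg hp x a b hab]; exact h1
      · rw [rad_seg, abs_of_nonneg ha]
        refine lt_of_le_of_lt ?_ h2
        exact mul_le_of_le_one_left (rad_nonneg x) (by linarith)
  · refine IsPreconnected.union (xppart m p x) ?_ (right_mem_segment _ _ _)
      (hc.isPreconnected.image _ continuous_injP.continuousOn)
      (convex_segment _ _).isPreconnected
    rw [xppart_eq]
    exact ⟨_, hx0, rfl⟩

theorem mem_slice (hp : p < m) {w : Fin (m + 1) → ℝ}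
    (hw : ∀ s : Fin (m + 1), (s : ℕ) ≤ p → w s = 0) (hw1 : ∑ s, w s ^ 2 = 1)
    (z : (Fin (p + 1) → ℝ) × ℝ) : z ∈ sliceSet m p (OmE m p Ω₀ ε) w ↔
      ∃ y0 ∈ Ω₀, z ∈ Metric.ball y0 (ε y0) ×ˢ Metric.ball (0 : ℝ) (ε y0) := by
  have h1 := projP_pt hp hw z.1 z.2
  have h2 := rad_of_xq (p := p) hw1 (xqpart_pt hw z.1 z.2)
  simp only [sliceSet, OmE, Set.mem_ofPred_eq, h1, h2, Set.mem_prod, Metric.mem_ball,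
    Real.dist_eq, sub_zero]

theorem isConnected_slice (hp : p < m) {w : Fin (m + 1) → ℝ}
    (hw : ∀ s : Fin (m + 1), (s : ℕ) ≤ p → w s = 0) (hw1 : ∑ s, w s ^ 2 = 1)
    (hε : ∀ y ∈ Ω₀, 0 < ε y)
    (hsub : ∀ y ∈ Ω₀, Metric.ball y (ε y) ⊆ Ω₀) (hc : IsConnected Ω₀) :
    IsConnected (sliceSet m p (OmE m p Ω₀ ε) w) := by
  obtain ⟨y1, hy1⟩ := hc.nonempty
  have h0 : ∀ y ∈ Ω₀, (y, (0 : ℝ)) ∈ sliceSet m p (OmE m p Ω₀ ε) w := fun y hy =>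
    (mem_slice hp hw hw1 _).2 ⟨y, hy, Metric.mem_ball_self (hε y hy),
      Metric.mem_ball_self (hε y hy)⟩
  refine ⟨⟨_, h0 y1 hy1⟩, isPreconnected_of_forall (y1, (0 : ℝ)) fun z hz => ?_⟩
  obtain ⟨y0, hy0, hz1, hz2⟩ := (mem_slice hp hw hw1 _).1 hz
  refine ⟨(fun y => (y, (0 : ℝ))) '' Ω₀ ∪ {z.1} ×ˢ Metric.ball (0 : ℝ) (ε y0), ?_,
    Or.inl ⟨y1, hy1, rfl⟩, Or.inr ⟨rfl, hz2⟩, ?_⟩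
  · refine Set.union_subset ?_ ?_
    · rintro _ ⟨y, hy, rfl⟩; exact h0 y hy
    · rintro ⟨y, r⟩ ⟨hy, hr⟩
      rw [Set.mem_singleton_iff] at hy
      simp only at hy
      subst hy
      exact (mem_slice hp hw hw1 _).2 ⟨y0, hy0, hz1, hr⟩
  · refine IsPreconnected.union (z.1, (0 : ℝ)) ⟨z.1, hsub y0 hy0 hz1, rfl⟩
      ⟨rfl, Metric.mem_ball_self (hε y0 hy0)⟩
      (hc.isPreconnected.image _ (by fun_prop))
      (isPreconnected_singleton.prod (convex_ball _ _).isPreconnected)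

end domain

section ck
variable {m p : ℕ} {conj : A → A}

theorem co0_neg (k : ℕ) (r : ℝ) : co 0 k (-r) = co 0 k r := by
  simp [co, pow_mul]

theorem co1_neg (k : ℕ) (r : ℝ) : co 1 k (-r) = - co 1 k r := by
  simp [co, pow_succ, pow_mul, neg_div]

theorem co0_abs (k : ℕ) (r : ℝ) : co 0 k |r| = co 0 k r := by
  rcases abs_choice r with h | h <;> rw [h]
  exact co0_neg k r

theorem CKe_pt (H : IsAltStarAlg A conj) {v : ℕ → A} (hv : IsHypBasis A conj v m) (hp : p < m)
    {w : Fin (m + 1) → ℝ} (hw : w ∈ Sph v m p) (f₀ : (Fin (p + 1) → ℝ) → A)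
    (y : Fin (p + 1) → ℝ) (r : ℝ) :
    CKe v m p f₀ (pt m p w y r) = (∑' k, co 0 k r • lapIterP p k f₀ y) +
      emb v m w * ∑' k, co 1 k r • lapIterP p k (DopP v p f₀) y := by
  have hw1 := Sph_norm H hv hw
  have hq := xqpart_pt (p := p) hw.1 y r
  have hr := rad_of_xq (p := p) hw1 hq
  have hP := projP_pt hp hw.1 y r
  have hdef : CKe v m p f₀ (pt m p w y r) = (∑' k, co 0 k |r| • lapIterP p k f₀ y) +
      emb v m ((|r|⁻¹ * r) • w) * ∑' k, co 1 k |r| • lapIterP p k (DopP v p f₀) y := by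
    rw [CKe, normq, hr, hP, hq, smul_smul]
    rfl
  have hsm : ∀ c : ℝ, emb v m (c • w) = c • emb v m w := by
    intro c; simp [emb, Finset.smul_sum, smul_smul]
  rw [hdef, hsm, H.smul_mul', ← H.mul_smul']
  simp only [co0_abs]
  congr 2
  rcases lt_trichotomy r 0 with h | h | h
  · rw [abs_of_neg h, inv_neg, neg_mul, inv_mul_cancel₀ h.ne, neg_smul, one_smul]
    simp only [co1_neg, neg_smul]
    rw [tsum_neg, neg_neg]
  · subst h; simp [co]
  · rw [abs_of_pos h, inv_mul_cancel₀ h.ne', one_smul]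

theorem CKe_injP (H : IsAltStarAlg A conj) {v : ℕ → A} (hp : p < m)
    (f₀ : (Fin (p + 1) → ℝ) → A) (y : Fin (p + 1) → ℝ) : CKe v m p f₀ (injP m p y) = f₀ y := by
  have h0 : ∀ b : A, (0 : A) * b = 0 := fun b => by simpa using H.smul_mul' 0 b b
  have he : emb v m (normq m p (injP m p y)) = 0 := by
    rw [normq, xqpart_injP]; simp [emb]
  rw [CKe, he, h0, add_zero, projP_injP hp, rad_injP, tsum_eq_single 0]
  · simp [lapIterP]
  · intro k hk
    simp [hk]

end ck

section main
variable {m p : ℕ} {conj : A → A}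

theorem gsm_aux (H : IsAltStarAlg A conj) {v : ℕ → A} (hv : IsHypBasis A conj v m) (hp : p < m)
    {w : Fin (m + 1) → ℝ} (hw : w ∈ Sph v m p)
    (L L' : Fin (p + 1) → A →L[ℝ] A) (hLv : ∀ s a, L s a = v (s : ℕ) * a)
    (hLp0 : ∀ a, L' 0 a = a) (hLps : ∀ s, s ≠ 0 → ∀ a, L' s a = -(v (s : ℕ) * a))
    {F1 F2 G : (Fin (p + 1) → ℝ) × ℝ → A} {z : (Fin (p + 1) → ℝ) × ℝ}
    (hG : ∀ z, G z = F1 z + emb v m w * F2 z)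
    (h1 : ContDiffAt ℝ 1 F1 z) (h2 : ContDiffAt ℝ 1 F2 z)
    (e1 : ∑ s, L s (pdSx p s F1 z) = pdSr p F2 z)
    (e2 : ∑ s, L' s (pdSx p s F2 z) = - pdSr p F1 z) :
    ContDiffAt ℝ 1 G z ∧ DomCR v m p w G z = 0 := by
  obtain ⟨M, hM⟩ := exists_mulL H
  have hGe : G = fun z => F1 z + M (emb v m w) (F2 z) := by
    funext z; rw [hG, hM]
  have hd1 := (h1.differentiableAt one_ne_zero).hasFDerivAt
  have hd2 := (h2.differentiableAt one_ne_zero).hasFDerivAt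
  have hd : HasFDerivAt G (fderiv ℝ F1 z + (M (emb v m w)).comp (fderiv ℝ F2 z)) z := by
    rw [hGe]
    exact hd1.add ((M (emb v m w)).hasFDerivAt.comp z hd2)
  refine ⟨?_, ?_⟩
  · rw [hGe]
    exact h1.add ((M (emb v m w)).contDiff.contDiffAt.comp z h2)
  · have hx : ∀ s, pdSx p s G z = pdSx p s F1 z + emb v m w * pdSx p s F2 z := by
      intro s; rw [pdSx, hd.fderiv, ← hM]; rfl
    have hr : pdSr p G z = pdSr p F1 z + emb v m w * pdSr p F2 z := by
      rw [pdSr, hd.fderiv, ← hM]; rfl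
    have hcomm : ∀ (s : Fin (p + 1)) (a : A),
        v (s : ℕ) * (emb v m w * a) = emb v m w * L' s a := by
      intro s a
      by_cases hs : s = 0
      · subst hs
        rw [hLp0, Fin.val_zero, hv.v_zero, H.one_mul']
      · have hs1 : 1 ≤ (s : ℕ) := Nat.one_le_iff_ne_zero.2 fun h => hs (Fin.ext h)
        have hs2 : (s : ℕ) ≤ p := Nat.lt_succ_iff.1 s.2
        rw [hLps s hs, Sph_anti H hv hw hs1 hs2 hp, H.mul_neg']
    have hsum : ∑ s : Fin (p + 1), emb v m w * L' s (pdSx p s F2 z) =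
        emb v m w * - pdSr p F1 z := by
      rw [← e2, ← hM, map_sum]
      simp only [hM]
    rw [DomCR, DopSx, hr]
    simp only [hx, H.mul_add', hcomm, Finset.sum_add_distrib]
    rw [hsum]
    simp only [← hLv]
    rw [e1, H.alt_left, hw.2, H.mul_neg']
    have : (-1 : A) * pdSr p F2 z = - pdSr p F2 z := by
      have := H.smul_mul' (-1) 1 (pdSr p F2 z)
      simpa [H.one_mul'] using this
    rw [this]
    abel

end main

/-- **CK-extension.** For a real analytic `f₀ : Ω₀ → 𝔸` on a domain `Ω₀ ⊆ ℝ^{p+1}`,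
there is a p-symmetric slice domain `Ω` with `Ω₀ ⊂ Ω ⊆ Ω₀*` on which the two series
defining `CK[f₀]` converge normally, `CK[f₀]` restricts to `f₀` on `Ω₀`, and
`CK[f₀]` is left generalized partial-slice monogenic on `Ω`. -/
theorem CK_extension
    {A : Type*} [NormedAddCommGroup A] [NormedSpace ℝ A] [Mul A] [One A]
    (conj : A → A) (H : IsAltStarAlg A conj)
    (v : ℕ → A) (m p : ℕ) (hv : IsHypBasis A conj v m) (hp : p < m)
    (Ω₀ : Set (Fin (p + 1) → ℝ)) (hΩ₀ : IsOpen Ω₀) (hΩ₀conn : IsConnected Ω₀)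
    (f₀ : (Fin (p + 1) → ℝ) → A) (hf₀ : AnalyticOnNhd ℝ f₀ Ω₀) :
    ∃ Ω : Set (Fin (m + 1) → ℝ),
      PSym v m p Ω ∧ SliceDomain v m p Ω ∧
      injP m p '' Ω₀ ⊆ Ω ∧ Ω ⊆ Omega0star m p Ω₀ ∧
      NormallyConvOn (fun (k : ℕ) (x : Fin (m + 1) → ℝ) =>
        (((-1 : ℝ) ^ k * rad m p x ^ (2 * k)) / (2 * k).factorial) •
          lapIterP p k f₀ (projP m p x)) Ω ∧
      NormallyConvOn (fun (k : ℕ) (x : Fin (m + 1) → ℝ) =>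
        (((-1 : ℝ) ^ k * rad m p x ^ (2 * k + 1)) / (2 * k + 1).factorial) •
          lapIterP p k (DopP v p f₀) (projP m p x)) Ω ∧
      (∀ y ∈ Ω₀, CKe v m p f₀ (injP m p y) = f₀ y) ∧
      GSM v m p (CKe v m p f₀) Ω := by
  have hfd := H.finDim
  have hcs : CompleteSpace A := FiniteDimensional.complete ℝ A
  obtain ⟨M, hM⟩ := exists_mulL H
  set L : Fin (p + 1) → A →L[ℝ] A := fun s => M (v (s : ℕ)) with hLdef
  set L' : Fin (p + 1) → A →L[ℝ] A :=
    fun s => if s = 0 then ContinuousLinearMap.id ℝ A else -(M (v (s : ℕ))) with hLpdef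
  have hLv : ∀ s a, L s a = v (s : ℕ) * a := fun s a => hM _ _
  have hLp0 : ∀ a, L' 0 a = a := fun a => by simp [hLpdef]
  have hLps : ∀ s, s ≠ 0 → ∀ a, L' s a = -(v (s : ℕ) * a) := fun s hs a => by
    simp [hLpdef, hs, hM]
  have hL0 : ∀ a, L 0 a = a := fun a => by
    rw [hLv, Fin.val_zero, hv.v_zero, H.one_mul']
  have hL : ∀ s t a, L' s (L t a) + L' t (L s a) = if s = t then (2 : ℝ) • a else 0 := by
    intro s t a
    by_cases hs : s = 0
    · subst hs
      by_cases ht : t = 0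
      · subst ht
        rw [if_pos rfl, hL0, hLp0, two_smul]
      · rw [if_neg (Ne.symm ht), hL0, hLp0, hLps t ht, hLv, add_neg_cancel]
    · by_cases ht : t = 0
      · subst ht
        rw [if_neg hs, hL0, hLp0, hLps s hs, hLv, neg_add_cancel]
      · have hs1 : 1 ≤ (s : ℕ) := Nat.one_le_iff_ne_zero.2 fun h => hs (Fin.ext h)
        have ht1 : 1 ≤ (t : ℕ) := Nat.one_le_iff_ne_zero.2 fun h => ht (Fin.ext h)
        have hs2 : (s : ℕ) ≤ m := by have := s.2; omega
        have ht2 : (t : ℕ) ≤ m := by have := t.2; omega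
        rw [hLps s hs, hLps t ht, hLv, hLv]
        split_ifs with h
        · subst h
          rw [H.alt_left, v_sq H hv hs1 hs2]
          have : (-1 : A) * a = - a := by
            have := H.smul_mul' (-1) 1 a
            simpa [H.one_mul'] using this
          rw [this, neg_neg, two_smul]
        · have := H.anti (hv.anticomm s t hs1 hs2 ht1 ht2 fun e => h (Fin.ext e)) a
          rw [← neg_add, this, neg_zero]
  have hD : DopP v p f₀ = TL L f₀ := by
    funext y
    simp only [DopP, TL, hLv]
  have hloc := fun y0 (h : y0 ∈ Ω₀) => local_ext hΩ₀ hf₀ L L' hL h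
  rw [← hD] at hloc
  choose! ε hε hsub hb1 hb2 hc1 hc2 heq using hloc
  refine ⟨OmE m p Ω₀ ε, ?_, ⟨isOpen_OmE, isConnected_OmE hp hε hsub hΩ₀conn, ?_, ?_⟩,
    ?_, ?_, ?_, ?_, fun y _ => CKe_injP H hp f₀ y, ?_⟩
  · rintro x ⟨y0, h0, h1, h2⟩ w hw
    refine ⟨y0, h0, ?_⟩
    have he : xppart m p x + rad m p x • w = pt m p w (projP m p x) (rad m p x) := by
      rw [xppart_eq]; rfl
    rw [he, projP_pt hp hw.1, rad_of_xq (Sph_norm H hv hw) (xqpart_pt hw.1 _ _),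
      abs_of_nonneg (rad_nonneg x)]
    exact ⟨h1, h2⟩
  · obtain ⟨y, hy⟩ := hΩ₀conn.nonempty
    exact ⟨_, injP_mem_OmE hp hε hy, xqpart_injP y⟩
  · intro w hw
    exact isConnected_slice hp hw.1 (Sph_norm H hv hw) hε hsub hΩ₀conn
  · rintro _ ⟨y, hy, rfl⟩
    exact injP_mem_OmE hp hε hy
  · intro x hx
    exact projP_mem hsub hx
  · rintro x ⟨y0, h0, h1, h2⟩
    obtain ⟨c, hc, hcb⟩ := hb1 y0 h0
    refine ⟨_, (isOpen_box y0 (ε y0)).mem_nhds ⟨h1, h2⟩, c, hc, fun k y hy => ?_⟩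
    exact hcb k _ hy.1 _ (by rw [abs_of_nonneg (rad_nonneg y)]; exact hy.2)
  · rintro x ⟨y0, h0, h1, h2⟩
    obtain ⟨c, hc, hcb⟩ := hb2 y0 h0
    refine ⟨_, (isOpen_box y0 (ε y0)).mem_nhds ⟨h1, h2⟩, c, hc, fun k y hy => ?_⟩
    exact hcb k _ hy.1 _ (by rw [abs_of_nonneg (rad_nonneg y)]; exact hy.2)
  · intro w hw
    have key : ∀ z ∈ sliceSet m p (OmE m p Ω₀ ε) w,
        ContDiffAt ℝ 1 (sliceFun m p (CKe v m p f₀) w) z ∧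
          DomCR v m p w (sliceFun m p (CKe v m p f₀) w) z = 0 := by
      intro z hz
      obtain ⟨y0, h0, hz0⟩ := (mem_slice hp hw.1 (Sph_norm H hv hw) z).1 hz
      have hn := (Metric.isOpen_ball.prod Metric.isOpen_ball).mem_nhds hz0
      exact gsm_aux H hv hp hw L L' hLv hLp0 hLps
        (fun z => CKe_pt H hv hp hw f₀ z.1 z.2)
        ((hc1 y0 h0).contDiffAt hn) ((hc2 y0 h0).contDiffAt hn)
        (heq y0 h0 z hz0).1 (heq y0 h0 z hz0).2
    exact ⟨fun z hz => (key z hz).1.contDiffWithinAt, fun z hz => (key z hz).2⟩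

end GPSM
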